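/- Let n ≥ 1. There exist constants ε₀ > 0 and c₂ > 0, depending only on n, with the following property: if K is a smooth, strictly convex body in ℝ^{n+1} with positive support function h containing the origin in its interior, and 1 − ε ≤ h(x)·det(A(x)+x⊗x) ≤ 1 + ε for all x ∈ S^n for some ε ∈ (0, ε₀), then the Hausdorff distance between the normalized body K̄ = (K − c(K))/(⨍ h̃ dθ) and the closed unit ball B satisfies δ_H(K̄, B) ≤ c₂·ε^{1/(n+2)}. -/

import Mathlib

open MeasureTheory Metric Real
open scoped InnerProductSpace ENNReal Topology

noncomputable section

/-- Euclidean space `ℝ^{n+1}`. -/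
abbrev Eu (n : ℕ) : Type := EuclideanSpace ℝ (Fin (n + 1))

/-- The unit sphere `S^n ⊆ ℝ^{n+1}` as a subtype. -/
abbrev Sph (n : ℕ) : Type := Metric.sphere (0 : Eu n) 1

/-- The spherical Lebesgue (surface) measure on `S^n`. -/
def sphMeas (n : ℕ) : Measure (Sph n) := (volume : Measure (Eu n)).toSphere

/-- The support function of a set `K ⊆ ℝ^{n+1}`. -/
def sfn {n : ℕ} (K : Set (Eu n)) (z : Eu n) : ℝ :=
  sSup ((fun y => ⟪z, y⟫_ℝ) '' K)

/-- The Hessian endomorphism `A(x) = D(∇ h_K)(x)`. -/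
def hessA {n : ℕ} (K : Set (Eu n)) (x : Eu n) : Eu n →L[ℝ] Eu n :=
  fderiv ℝ (gradient (sfn K)) x

/-- The rank-one endomorphism `x ⊗ x : v ↦ ⟨v, x⟩ x`. -/
def tens {n : ℕ} (x : Eu n) : Eu n →L[ℝ] Eu n :=
  (innerSL ℝ x).smulRight x

/-- `det (A(x) + x ⊗ x)`, the reciprocal Gauss curvature `1/𝒦` at `x ∈ S^n`. -/
def rK {n : ℕ} (K : Set (Eu n)) (x : Eu n) : ℝ :=
  LinearMap.det ((hessA K x + tens x : Eu n →L[ℝ] Eu n) : Eu n →ₗ[ℝ] Eu n)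

/-- `K` is a smooth, strictly convex body with positive support function. -/
structure IsSmoothConvexBody {n : ℕ} (K : Set (Eu n)) : Prop where
  compact : IsCompact K
  convex : Convex ℝ K
  interior_nonempty : (interior K).Nonempty
  pos : ∀ x : Sph n, 0 < sfn K x
  smooth : ContDiffOn ℝ (⊤ : ℕ∞) (sfn K) {(0 : Eu n)}ᶜ
  posdef : ∀ x : Sph n, ∀ v : Eu n, v ≠ 0 →
    0 < ⟪(hessA K (x : Eu n) + tens (x : Eu n)) v, v⟫_ℝ

/-- The density `h·det(A + x⊗x)` of the measure `dV` with respect to `dθ`. -/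
def dens {n : ℕ} (K : Set (Eu n)) (x : Eu n) : ℝ := sfn K x * rK K x

/-- The centroid-type point `c(K) = (∫ ∇h_K dV)/(∫ dV)`. -/
def cK {n : ℕ} (K : Set (Eu n)) : Eu n :=
  (∫ x : Sph n, dens K x ∂sphMeas n)⁻¹ •
    ∫ x : Sph n, dens K x • gradient (sfn K) x ∂sphMeas n

/-- The support function of the translated body `K - c(K)`. -/
def tsfn {n : ℕ} (K : Set (Eu n)) (x : Eu n) : ℝ := sfn K x - ⟪x, cK K⟫_ℝ

/-!
The Prékopa–Leindler inequality, expanded to second order along an exponential tilt, bounds the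
variance of suitable functions under a log-concave density on `ℝ^{n+1}` by an energy in the inverse
Hessian of the potential. Applied to the density `exp (-‖·‖_K² / 2)` of the gauge of `K` and
transported by `z ↦ h_K(z) ∇h_K(z)`, it becomes an inequality on the sphere with weight
`h det (A + x ⊗ x)`, tested on the coordinates of `∇h_K`. When the weight is within `ε` of `1`,
Green's formula on the sphere turns it into `∫ ‖∇h̃‖² - ∫ h̃² = O(ε)`, and the spherical Poincaré
inequality, itself a trace of the Gaussian one, then makes `h̃` `L²`-close to its mean. Finally `h̃`
is Lipschitz, so a deviation `δ` at one point persists on a cap of radius proportional to `δ`, which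
costs `δ ^ (n + 2)` in `∫ (h̃ - ⨍ h̃)²`.
-/

open Filter Module ProbabilityTheory

section PrekopaLeindler

open scoped Pointwise

lemma volume_add_volume_le_of_isCompact {A B : Set ℝ} (hA : IsCompact A) (hB : IsCompact B)
    (hA₀ : A.Nonempty) (hB₀ : B.Nonempty) : volume A + volume B ≤ volume (A + B) := by
  obtain ⟨a, haA, ha⟩ := hA.exists_isGreatest hA₀
  obtain ⟨b, hbB, hb⟩ := hB.exists_isLeast hB₀
  have hdisj : AEDisjoint volume ((b + ·) '' A) ((a + ·) '' B) := by
    refine measure_mono_null (t := {a + b}) ?_ (by simp)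
    rintro _ ⟨⟨x, hx, rfl⟩, y, hy, hxy : a + y = b + x⟩
    have hxa : x ≤ a := ha hx
    have hby : b ≤ y := hb hy
    change b + x = a + b
    linarith
  have hmeas : MeasurableSet ((b + ·) '' A) := (hA.image (by fun_prop)).measurableSet
  calc volume A + volume B = volume ((b + ·) '' A) + volume ((a + ·) '' B) := by simp
    _ = volume ((b + ·) '' A ∪ (a + ·) '' B) := (measure_union₀' hmeas.nullMeasurableSet hdisj).symm
    _ ≤ volume (A + B) := by
      refine measure_mono (Set.union_subset ?_ ?_)
      · rintro _ ⟨x, hx, rfl⟩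
        exact ⟨x, hx, b, hbB, add_comm x b⟩
      · rintro _ ⟨y, hy, rfl⟩
        exact ⟨a, haA, y, hy, rfl⟩

lemma volume_add_volume_le_of_measurableSet {A B : Set ℝ} (hA : MeasurableSet A)
    (hB : MeasurableSet B) (hA₀ : A.Nonempty) (hB₀ : B.Nonempty) :
    volume A + volume B ≤ volume (A + B) := by
  obtain ⟨a, ha⟩ := hA₀
  obtain ⟨b, hb⟩ := hB₀
  rw [hA.measure_eq_iSup_isCompact, hB.measure_eq_iSup_isCompact]
  simp only [iSup_and']
  refine ENNReal.biSup_add_biSup_le' ⟨∅, by simp⟩ ⟨∅, by simp⟩ ?_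
  rintro K ⟨hKA, hK⟩ L ⟨hLB, hL⟩
  calc volume K + volume L ≤ volume (insert a K) + volume (insert b L) := by
        gcongr <;> exact Set.subset_insert _ _
    _ ≤ volume (insert a K + insert b L) :=
        volume_add_volume_le_of_isCompact (hK.insert a) (hL.insert b) ⟨a, by simp⟩ ⟨b, by simp⟩
    _ ≤ volume (A + B) := measure_mono
        (Set.add_subset_add (Set.insert_subset ha hKA) (Set.insert_subset hb hLB))

lemma volume_add_volume_le_two_mul_of_midpoint_mem {A B S : Set ℝ} (hA : MeasurableSet A)
    (hB : MeasurableSet B) (hA₀ : A.Nonempty) (hB₀ : B.Nonempty)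
    (hS : ∀ a ∈ A, ∀ b ∈ B, midpoint ℝ a b ∈ S) : volume A + volume B ≤ 2 * volume S := by
  have hsub : A + B ⊆ (2 : ℝ) • S := by
    rintro _ ⟨a, ha, b, hb, rfl⟩
    exact ⟨midpoint ℝ a b, hS a ha b hb, by simp [midpoint_eq_smul_add]⟩
  calc volume A + volume B ≤ volume (A + B) := volume_add_volume_le_of_measurableSet hA hB hA₀ hB₀
    _ ≤ volume ((2 : ℝ) • S) := measure_mono hsub
    _ = 2 * volume S := by simp [Measure.addHaar_smul]

lemma lintegral_eq_lintegral_measure_ofReal_lt {α : Type*} [MeasurableSpace α] {μ : Measure α}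
    [SFinite μ] {u : α → ℝ≥0∞} (hu : Measurable u) :
    ∫⁻ x, u x ∂μ = ∫⁻ t in Set.Ioi (0 : ℝ), μ {x | ENNReal.ofReal t < u x} := by
  have hmeas : MeasurableSet {p : α × ℝ | ENNReal.ofReal p.2 < u p.1} :=
    measurableSet_lt (by fun_prop) (by fun_prop)
  have hlength (c : ℝ≥0∞) : volume.restrict (Set.Ioi 0) {t : ℝ | ENNReal.ofReal t < c} = c := by
    rw [Measure.restrict_apply (measurableSet_lt (by fun_prop) measurable_const)]
    induction c with
    | top => simp
    | coe c =>
      have : {t : ℝ | ENNReal.ofReal t < c} ∩ Set.Ioi 0 = Set.Ioo 0 (c : ℝ) := by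
        ext t
        simp only [Set.mem_inter_iff, Set.mem_ofPred_eq, Set.mem_Ioi, Set.mem_Ioo]
        refine and_comm.trans (and_congr_right fun ht => ?_)
        rw [← ENNReal.ofReal_coe_nnreal, ENNReal.ofReal_lt_ofReal_iff_of_nonneg ht.le]
      simp [this]
  calc ∫⁻ x, u x ∂μ = (μ.prod (volume.restrict (Set.Ioi 0)))
          {p : α × ℝ | ENNReal.ofReal p.2 < u p.1} := by
        rw [Measure.prod_apply hmeas]
        exact lintegral_congr fun x => (hlength (u x)).symm
    _ = ∫⁻ t in Set.Ioi (0 : ℝ), μ {x | ENNReal.ofReal t < u x} := Measure.prod_apply_symm hmeas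

lemma lintegral_add_lintegral_le_two_mul_of_iSup_eq_one {u v w : ℝ → ℝ≥0∞} (hu : Measurable u)
    (hv : Measurable v) (hw : Measurable w) (hu₁ : ⨆ x, u x = 1) (hv₁ : ⨆ x, v x = 1)
    (h : ∀ a b, u a * v b ≤ w (midpoint ℝ a b) ^ 2) :
    (∫⁻ x, u x) + ∫⁻ x, v x ≤ 2 * ∫⁻ x, w x := by
  have hlevel (f : ℝ → ℝ≥0∞) : Measurable fun t => volume {x | ENNReal.ofReal t < f x} :=
    Antitone.measurable fun s t hst => measure_mono fun x hx =>
      (ENNReal.ofReal_le_ofReal hst).trans_lt hx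
  rw [lintegral_eq_lintegral_measure_ofReal_lt hu, lintegral_eq_lintegral_measure_ofReal_lt hv,
    lintegral_eq_lintegral_measure_ofReal_lt hw, ← lintegral_add_left (hlevel u),
    ← lintegral_const_mul _ (hlevel w)]
  refine lintegral_mono fun t => ?_
  rcases lt_or_ge (ENNReal.ofReal t) 1 with ht | ht
  · have hexists {f : ℝ → ℝ≥0∞} (hf : ⨆ x, f x = 1) : ∃ x, ENNReal.ofReal t < f x :=
      lt_iSup_iff.1 (ht.trans_eq hf.symm)
    refine volume_add_volume_le_two_mul_of_midpoint_mem (measurableSet_lt measurable_const hu)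
      (measurableSet_lt measurable_const hv) (hexists hu₁) (hexists hv₁) fun a ha b hb => ?_
    have hsq : ENNReal.ofReal t ^ 2 < w (midpoint ℝ a b) ^ 2 :=
      (sq (ENNReal.ofReal t) ▸ ENNReal.mul_lt_mul ha hb).trans_le (h a b)
    exact lt_of_not_ge fun hle => hsq.not_ge (pow_le_pow_left' hle 2)
  · have hempty {f : ℝ → ℝ≥0∞} (hf : ⨆ x, f x = 1) : {x | ENNReal.ofReal t < f x} = ∅ :=
      Set.eq_empty_of_forall_notMem fun x hx =>
        (hx.trans_le ((le_iSup f x).trans (hf.trans_le ht))).false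
    simp [hempty hu₁, hempty hv₁]

lemma mul_le_sq_of_add_le_two_mul {x y z : ℝ≥0∞} (h : x + y ≤ 2 * z) :
    x * y ≤ z ^ 2 := by
  rcases eq_or_ne z ⊤ with rfl | hz
  · simp
  lift z to NNReal using hz
  have hfin : x + y ≠ ⊤ := ne_top_of_le_ne_top (by finiteness) h
  lift x to NNReal using (ENNReal.add_ne_top.1 hfin).1
  lift y to NNReal using (ENNReal.add_ne_top.1 hfin).2
  norm_cast at h ⊢
  rw [← NNReal.coe_le_coe] at h ⊢
  push_cast at h ⊢
  nlinarith [sq_nonneg (x - y : ℝ), x.coe_nonneg, y.coe_nonneg]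

lemma lintegral_mul_lintegral_le_sq_of_iSup_ne_top {u v w : ℝ → ℝ≥0∞} (hu : Measurable u)
    (hv : Measurable v) (hw : Measurable w) (hu_top : ⨆ x, u x ≠ ⊤) (hv_top : ⨆ x, v x ≠ ⊤)
    (h : ∀ a b, u a * v b ≤ w (midpoint ℝ a b) ^ 2) :
    (∫⁻ x, u x) * ∫⁻ x, v x ≤ (∫⁻ x, w x) ^ 2 := by
  set α := ⨆ x, u x with hα
  set β := ⨆ x, v x with hβ
  rcases eq_or_ne α 0 with hα₀ | hα₀
  · simp [ENNReal.iSup_eq_zero.1 hα₀]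
  rcases eq_or_ne β 0 with hβ₀ | hβ₀
  · simp [ENNReal.iSup_eq_zero.1 hβ₀]
  set γ := (α * β) ^ (2⁻¹ : ℝ) with hγ
  have hγ_sq : γ ^ 2 = α * β := by
    rw [hγ, ← ENNReal.rpow_natCast, ← ENNReal.rpow_mul]
    norm_num
  have hγ₀ : γ ≠ 0 := fun h₀ => by simp [h₀, hα₀, hβ₀, eq_comm] at hγ_sq
  have hγ_top : γ ≠ ⊤ := ENNReal.rpow_ne_top_of_nonneg (by norm_num) (by finiteness)
  have hnormalised : α⁻¹ * (∫⁻ x, u x) + β⁻¹ * ∫⁻ x, v x ≤ 2 * (γ⁻¹ * ∫⁻ x, w x) := by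
    rw [← lintegral_const_mul _ hu, ← lintegral_const_mul _ hv, ← lintegral_const_mul _ hw]
    refine lintegral_add_lintegral_le_two_mul_of_iSup_eq_one (by fun_prop) (by fun_prop)
      (by fun_prop) ?_ ?_ fun a b => ?_
    · rw [← ENNReal.mul_iSup, ← hα, ENNReal.inv_mul_cancel hα₀ hu_top]
    · rw [← ENNReal.mul_iSup, ← hβ, ENNReal.inv_mul_cancel hβ₀ hv_top]
    · rw [mul_mul_mul_comm, ← ENNReal.mul_inv (.inl hα₀) (.inl hu_top), ← hγ_sq, mul_pow,
        ENNReal.inv_pow]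
      gcongr
      exact h a b
  calc (∫⁻ x, u x) * ∫⁻ x, v x
      = (α * β) * ((α⁻¹ * ∫⁻ x, u x) * (β⁻¹ * ∫⁻ x, v x)) := by
        rw [mul_mul_mul_comm, ENNReal.mul_inv_cancel_left hα₀ hu_top,
          ENNReal.mul_inv_cancel_left hβ₀ hv_top]
    _ ≤ γ ^ 2 * (γ⁻¹ * ∫⁻ x, w x) ^ 2 := by
        rw [hγ_sq]
        gcongr
        exact mul_le_sq_of_add_le_two_mul hnormalised
    _ = (∫⁻ x, w x) ^ 2 := by rw [← mul_pow, ENNReal.mul_inv_cancel_left hγ₀ hγ_top]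

/-- The midpoint form of the Prékopa–Leindler inequality for the measure `μ`. -/
def SatisfiesPrekopaLeindler {E : Type*} [AddCommGroup E] [Module ℝ E] [MeasurableSpace E]
    (μ : Measure E) : Prop :=
  ∀ ⦃u v w : E → ℝ≥0∞⦄, Measurable u → Measurable v → Measurable w →
    (∀ a b, u a * v b ≤ w (midpoint ℝ a b) ^ 2) →
      (∫⁻ x, u x ∂μ) * ∫⁻ x, v x ∂μ ≤ (∫⁻ x, w x ∂μ) ^ 2

lemma satisfiesPrekopaLeindler_volume_real :
    SatisfiesPrekopaLeindler (volume : Measure ℝ) := by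
  intro u v w hu hv hw h
  have htrunc {f : ℝ → ℝ≥0∞} (hf : Measurable f) :
      ⨆ k : ℕ, ∫⁻ x, min (f x) k = ∫⁻ x, f x := by
    rw [← lintegral_iSup (fun k => by fun_prop) fun i j hij x => by simp only; gcongr]
    refine lintegral_congr fun x => ?_
    rw [← inf_iSup_eq, ENNReal.iSup_natCast, inf_top_eq]
  have hmono (f : ℝ → ℝ≥0∞) : Monotone fun k : ℕ => ∫⁻ x, min (f x) k :=
    fun i j hij => lintegral_mono fun x => by simp only; gcongr
  have hsup (f : ℝ → ℝ≥0∞) (k : ℕ) : ⨆ x, min (f x) k ≠ ⊤ :=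
    ne_top_of_le_ne_top (ENNReal.natCast_ne_top k) (iSup_le fun x => min_le_right _ _)
  rw [← htrunc hu, ← htrunc hv]
  simp only [ENNReal.iSup_mul, ENNReal.mul_iSup]
  refine iSup₂_le fun j i => ?_
  calc (∫⁻ x, min (u x) i) * ∫⁻ x, min (v x) j
      ≤ (∫⁻ x, min (u x) ↑(max i j)) * ∫⁻ x, min (v x) ↑(max i j) :=
        mul_le_mul' (hmono u (le_max_left i j)) (hmono v (le_max_right i j))
    _ ≤ (∫⁻ x, w x) ^ 2 :=
        lintegral_mul_lintegral_le_sq_of_iSup_ne_top (by fun_prop) (by fun_prop) hw (hsup u _)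
          (hsup v _) fun a b => (mul_le_mul' (min_le_left _ _) (min_le_left _ _)).trans (h a b)

namespace SatisfiesPrekopaLeindler

variable {E F : Type*} [AddCommGroup E] [Module ℝ E] [MeasurableSpace E] [AddCommGroup F]
  [Module ℝ F] [MeasurableSpace F] {μ : Measure E} {ν : Measure F}

lemma of_measurePreserving (hμ : SatisfiesPrekopaLeindler μ) (e : E →ₗ[ℝ] F)
    (he : MeasurePreserving e μ ν) : SatisfiesPrekopaLeindler ν := by
  intro u v w hu hv hw h
  rw [← he.lintegral_comp hu, ← he.lintegral_comp hv, ← he.lintegral_comp hw]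
  refine hμ (hu.comp he.measurable) (hv.comp he.measurable) (hw.comp he.measurable) fun a b => ?_
  simpa [midpoint_eq_smul_add] using h (e a) (e b)

lemma prod [SFinite μ] [SFinite ν] (hμ : SatisfiesPrekopaLeindler μ)
    (hν : SatisfiesPrekopaLeindler ν) : SatisfiesPrekopaLeindler (μ.prod ν) := by
  intro u v w hu hv hw h
  rw [lintegral_prod _ hu.aemeasurable, lintegral_prod _ hv.aemeasurable,
    lintegral_prod _ hw.aemeasurable]
  exact hμ hu.lintegral_prod_right' hv.lintegral_prod_right' hw.lintegral_prod_right'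
    fun a b => hν (by fun_prop) (by fun_prop) (by fun_prop) fun x y => h (a, x) (b, y)

end SatisfiesPrekopaLeindler

lemma satisfiesPrekopaLeindler_volume_pi (N : ℕ) :
    SatisfiesPrekopaLeindler (volume : Measure (Fin N → ℝ)) := by
  induction N with
  | zero =>
    intro u v w hu hv hw h
    rw [volume_pi, Measure.pi_of_empty (x := 0), lintegral_dirac' _ hu, lintegral_dirac' _ hv,
      lintegral_dirac' _ hw]
    simpa using h 0 0
  | succ N ih =>
    let e := (Fin.consLinearEquiv ℝ fun _ : Fin (N + 1) => ℝ).toLinearMap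
    have he : ⇑e = (MeasurableEquiv.piFinSuccAbove (fun _ => ℝ) 0).symm := by
      funext p
      exact (Fin.insertNth_zero (α := fun _ => ℝ) p.1 p.2).symm
    refine (satisfiesPrekopaLeindler_volume_real.prod ih).of_measurePreserving e ?_
    rw [he]
    exact (volume_preserving_piFinSuccAbove (fun _ => ℝ) 0).symm

theorem satisfiesPrekopaLeindler_volume (E : Type*) [NormedAddCommGroup E]
    [InnerProductSpace ℝ E] [FiniteDimensional ℝ E] [MeasurableSpace E] [BorelSpace E] :
    SatisfiesPrekopaLeindler (volume : Measure E) :=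
  (satisfiesPrekopaLeindler_volume_pi (finrank ℝ E)).of_measurePreserving
    ((stdOrthonormalBasis ℝ E).repr.symm.toLinearMap ∘ₗ (WithLp.linearEquiv 2 ℝ _).symm.toLinearMap)
    ((stdOrthonormalBasis ℝ E).measurePreserving_repr_symm.comp (PiLp.volume_preserving_toLp _))

end PrekopaLeindler

section VarianceInequality

lemma one_add_sq_div_two_le_cosh (x : ℝ) : 1 + x ^ 2 / 2 ≤ cosh x := by
  wlog hx : 0 ≤ x generalizing x
  · simpa using this (-x) (by linarith)
  have hsinh : x / 2 ≤ sinh (x / 2) := self_le_sinh_iff.2 (by positivity)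
  calc 1 + x ^ 2 / 2 ≤ 1 + 2 * sinh (x / 2) ^ 2 := by nlinarith
    _ = cosh (2 * (x / 2)) := by rw [cosh_two_mul, cosh_sq]; ring
    _ = cosh x := by ring_nf

-- Both sides are moments of `X - X'` for an independent copy `X'` of `X`.
lemma one_add_sq_mul_variance_le_mgf_mul_mgf_neg {Ω : Type*} [MeasurableSpace Ω] {μ : Measure Ω}
    [IsProbabilityMeasure μ] {X : Ω → ℝ} (hX : ∀ t, Integrable (fun ω => exp (t * X ω)) μ)
    (t : ℝ) : 1 + t ^ 2 * Var[X; μ] ≤ mgf X μ t * mgf X μ (-t) := by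
  have hpow (k : ℕ) : Integrable (fun ω => X ω ^ k) μ :=
    integrable_pow_of_integrable_exp_mul one_ne_zero (hX 1) (hX (-1)) k
  have hX₁ : Integrable X μ := by simpa using hpow 1
  have hX₂ : MemLp X 2 μ := (memLp_two_iff_integrable_sq hX₁.aestronglyMeasurable).2 (hpow 2)
  have hexp (s : ℝ) : Integrable (fun p : Ω × Ω => exp (s * X p.1) * exp (-s * X p.2))
      (μ.prod μ) := (hX s).mul_prod (hX (-s))
  have hmgf (s : ℝ) :
      ∫ p : Ω × Ω, exp (s * X p.1) * exp (-s * X p.2) ∂μ.prod μ = mgf X μ s * mgf X μ (-s) :=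
    integral_prod_mul (fun ω => exp (s * X ω)) fun ω => exp (-s * X ω)
  have hdiff : MemLp (fun p : Ω × Ω => X p.1 + (-X) p.2) 2 (μ.prod μ) :=
    (hX₂.comp_fst μ).add (hX₂.neg.comp_snd μ)
  have hvar : ∫ p : Ω × Ω, (X p.1 - X p.2) ^ 2 ∂μ.prod μ = 2 * Var[X; μ] := by
    have h := variance_add_prod (μ := μ) (ν := μ) hX₂ hX₂.neg
    rw [variance_neg, variance_of_integral_eq_zero hdiff.aemeasurable] at h
    · simpa [sub_eq_add_neg, two_mul] using h
    · rw [integral_add (hX₁.comp_fst μ) (hX₁.neg.comp_snd μ), integral_fun_fst, integral_fun_snd]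
      simp [integral_neg]
  have hcosh (p : Ω × Ω) : 1 + t ^ 2 / 2 * (X p.1 - X p.2) ^ 2 ≤
      (exp (t * X p.1) * exp (-t * X p.2) + exp (-t * X p.1) * exp (-(-t) * X p.2)) / 2 := by
    have h := one_add_sq_div_two_le_cosh (t * X p.1 - t * X p.2)
    rw [cosh_eq] at h
    simp only [← exp_add]
    convert h using 1 <;> ring_nf
  have hsq : Integrable (fun p : Ω × Ω => (X p.1 - X p.2) ^ 2) (μ.prod μ) := by
    simpa [sub_eq_add_neg] using hdiff.integrable_sq
  calc 1 + t ^ 2 * Var[X; μ] = ∫ p : Ω × Ω, 1 + t ^ 2 / 2 * (X p.1 - X p.2) ^ 2 ∂μ.prod μ := by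
        rw [integral_add (integrable_const _) (hsq.const_mul _), integral_const_mul, hvar]
        simp only [integral_const, probReal_univ, smul_eq_mul, mul_one, add_right_inj]
        ring
    _ ≤ ∫ p : Ω × Ω, (exp (t * X p.1) * exp (-t * X p.2) +
          exp (-t * X p.1) * exp (-(-t) * X p.2)) / 2 ∂μ.prod μ :=
        integral_mono ((integrable_const _).add (hsq.const_mul _))
          (((hexp t).add (hexp (-t))).div_const 2) hcosh
    _ = mgf X μ t * mgf X μ (-t) := by
        rw [integral_div, integral_add (hexp t) (hexp (-t)), hmgf, hmgf, neg_neg]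
        ring

lemma integral_exp_le_of_abs_le {Ω : Type*} [MeasurableSpace Ω] {μ : Measure Ω}
    [IsProbabilityMeasure μ] {q : Ω → ℝ} {r C : ℝ} (hq : AEStronglyMeasurable q μ) (hr : 0 ≤ r)
    (hqC : ∀ ω, |q ω| ≤ C) (hrC : r * C ≤ 1) :
    ∫ ω, exp (r * q ω) ∂μ ≤ 1 + r * (∫ ω, q ω ∂μ + r * C ^ 2) := by
  have hbound (ω : Ω) : |r * q ω| ≤ r * C := by
    rw [abs_mul, abs_of_nonneg hr]
    exact mul_le_mul_of_nonneg_left (hqC ω) hr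
  have hqint : Integrable q μ := .of_bound hq C (.of_forall hqC)
  have hexp (ω : Ω) : exp (r * q ω) ≤ (1 + (r * C) ^ 2) + r * q ω := by
    have hTaylor := (abs_le.1 (abs_exp_sub_one_sub_id_le ((hbound ω).trans hrC))).2
    have hsq : (r * q ω) ^ 2 ≤ (r * C) ^ 2 :=
      sq_le_sq' (abs_le.1 (hbound ω)).1 (abs_le.1 (hbound ω)).2
    linarith
  calc ∫ ω, exp (r * q ω) ∂μ ≤ ∫ ω, (1 + (r * C) ^ 2) + r * q ω ∂μ :=
        integral_mono_of_nonneg (.of_forall fun ω => (exp_pos _).le)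
          ((integrable_const _).add (hqint.const_mul r)) (.of_forall hexp)
    _ = 1 + r * (∫ ω, q ω ∂μ + r * C ^ 2) := by
        rw [integral_add (integrable_const _) (hqint.const_mul r), integral_const_mul]
        simp only [integral_const, probReal_univ, smul_eq_mul, one_mul]
        ring

-- Compare the second-order terms at `s = 0` on the two sides of `hmgf`.
lemma variance_le_integral_of_mgf_mul_mgf_neg_le {Ω : Type*} [MeasurableSpace Ω] {μ : Measure Ω}
    [IsProbabilityMeasure μ] {f q₀ : Ω → ℝ} {q : ℝ → Ω → ℝ} {C : ℝ}
    (hf : ∀ t, Integrable (fun ω => exp (t * f ω)) μ)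
    (hq : ∀ s > 0, AEStronglyMeasurable (q s) μ) (hqC : ∀ s > 0, ∀ ω, |q s ω| ≤ C)
    (hlim : ∀ᵐ ω ∂μ, Tendsto (q · ω) (𝓝[>] 0) (𝓝 (q₀ ω)))
    (hmgf : ∀ s > 0, mgf f μ s * mgf f μ (-s) ≤ (∫ ω, exp (s ^ 2 / 2 * q s ω) ∂μ) ^ 2) :
    Var[f; μ] ≤ ∫ ω, q₀ ω ∂μ := by
  have hpos : ∀ᶠ s : ℝ in 𝓝[>] 0, 0 < s := eventually_mem_nhdsWithin
  have hint : Tendsto (fun s => ∫ ω, q s ω ∂μ) (𝓝[>] 0) (𝓝 (∫ ω, q₀ ω ∂μ)) :=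
    tendsto_integral_filter_of_dominated_convergence (fun _ => C) (hpos.mono hq)
      (hpos.mono fun s hs => .of_forall (hqC s hs)) (integrable_const C) hlim
  have hid : Tendsto (fun s : ℝ => s) (𝓝[>] 0) (𝓝 0) := nhdsWithin_le_nhds
  have hsq : Tendsto (fun s : ℝ => s ^ 2 / 2) (𝓝[>] 0) (𝓝 0) := by
    simpa using (hid.pow 2).div_const 2
  have hsmall : ∀ᶠ s : ℝ in 𝓝[>] 0, s ^ 2 / 2 * C ≤ 1 :=
    (hsq.mul_const C).eventually_le_const (by simp)
  set w : ℝ → ℝ := fun s => ∫ ω, q s ω ∂μ + s ^ 2 / 2 * C ^ 2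
  have hwlim : Tendsto w (𝓝[>] 0) (𝓝 (∫ ω, q₀ ω ∂μ)) := by
    simpa using hint.add (hsq.mul_const (C ^ 2))
  have hle : ∀ᶠ s in 𝓝[>] 0, Var[f; μ] ≤ w s + s ^ 2 / 2 * (w s ^ 2 / 2) := by
    filter_upwards [hpos, hsmall] with s hs hsC
    have hsq_pos : 0 < s ^ 2 := by positivity
    have hexp := integral_exp_le_of_abs_le (hq s hs) (by positivity) (hqC s hs) hsC
    have hprod : 1 + s ^ 2 * Var[f; μ] ≤ (1 + s ^ 2 / 2 * w s) ^ 2 :=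
      calc 1 + s ^ 2 * Var[f; μ] ≤ mgf f μ s * mgf f μ (-s) :=
            one_add_sq_mul_variance_le_mgf_mul_mgf_neg hf s
        _ ≤ (∫ ω, exp (s ^ 2 / 2 * q s ω) ∂μ) ^ 2 := hmgf s hs
        _ ≤ (1 + s ^ 2 / 2 * w s) ^ 2 :=
            pow_le_pow_left₀ (integral_nonneg fun ω => (exp_pos _).le) hexp 2
    refine le_of_mul_le_mul_left ?_ hsq_pos
    linarith
  refine le_of_tendsto_of_tendsto tendsto_const_nhds ?_ hle
  simpa using hwlim.add (hsq.mul ((hwlim.pow 2).div_const 2))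

variable {E : Type*} [NormedAddCommGroup E] [InnerProductSpace ℝ E] [FiniteDimensional ℝ E]
  [MeasurableSpace E] [BorelSpace E]

lemma integrable_exp_neg_mul_norm_sq {κ : ℝ} (hκ : 0 < κ) :
    Integrable fun y : E => exp (-κ * ‖y‖ ^ 2) := by
  have h := (GaussianFourier.integrable_cexp_neg_mul_sq_norm_add (V := E) (b := (κ : ℂ))
    (by simpa using hκ) 0 0).norm
  refine h.congr (.of_forall fun y => ?_)
  simp only [Complex.norm_exp, zero_mul, add_zero]
  norm_cast

lemma integrable_exp_of_le_sub_norm_sq {g : E → ℝ} {κ C : ℝ} (hg : AEStronglyMeasurable g)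
    (hκ : 0 < κ) (hgC : ∀ y, g y ≤ C * ‖y‖ - κ * ‖y‖ ^ 2) : Integrable fun y => exp (g y) := by
  refine ((integrable_exp_neg_mul_norm_sq (E := E) (half_pos hκ)).const_mul
    (exp (C ^ 2 / (2 * κ)))).mono' (continuous_exp.comp_aestronglyMeasurable hg)
    (.of_forall fun y => ?_)
  rw [norm_of_nonneg (exp_pos _).le, ← exp_add, exp_le_exp]
  refine (hgC y).trans ?_
  have hsq : C * ‖y‖ ≤ C ^ 2 / (2 * κ) + κ / 2 * ‖y‖ ^ 2 := by
    rw [div_add' _ _ _ (by positivity), le_div_iff₀ (by positivity)]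
    nlinarith [sq_nonneg (C - κ * ‖y‖)]
  linarith

lemma integral_exp_mul_integral_exp_le_sq {u v w : E → ℝ} (hu : Measurable u) (hv : Measurable v)
    (hw : Measurable w) (hw_int : Integrable fun y => exp (w y))
    (h : ∀ a b, u a + v b ≤ 2 * w (midpoint ℝ a b)) :
    (∫ y, exp (u y)) * ∫ y, exp (v y) ≤ (∫ y, exp (w y)) ^ 2 := by
  have hPL := satisfiesPrekopaLeindler_volume E (u := fun y => ENNReal.ofReal (exp (u y)))
    (v := fun y => ENNReal.ofReal (exp (v y))) (w := fun y => ENNReal.ofReal (exp (w y)))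
    (by fun_prop) (by fun_prop) (by fun_prop) fun a b => by
      rw [← ENNReal.ofReal_mul (exp_pos _).le, ← ENNReal.ofReal_pow (exp_pos _).le, ← exp_add,
        ← exp_nat_mul]
      exact ENNReal.ofReal_le_ofReal (exp_le_exp.2 (h a b))
  have hlintegral {g : E → ℝ} (hg : Measurable g) :
      ∫ y, exp (g y) = (∫⁻ y, ENNReal.ofReal (exp (g y))).toReal :=
    integral_eq_lintegral_of_nonneg_ae (.of_forall fun y => (exp_pos _).le)
      (by fun_prop)
  rw [hlintegral hu, hlintegral hv, hlintegral hw, ← ENNReal.toReal_mul, ← ENNReal.toReal_pow]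
  refine ENNReal.toReal_mono (ENNReal.pow_ne_top ?_) hPL
  exact hw_int.lintegral_lt_top.ne

theorem variance_tilted_le_integral {V f q₀ : E → ℝ} {q : ℝ → E → ℝ} {κ C D : ℝ} (hκ : 0 < κ)
    (hV : Measurable V) (hf : Measurable f) (hVκ : ∀ y, κ * ‖y‖ ^ 2 ≤ V y)
    (hfC : ∀ y, |f y| ≤ C * ‖y‖) (hq : ∀ s > 0, Measurable (q s))
    (hqD : ∀ s > 0, ∀ y, |q s y| ≤ D) (hlim : ∀ᵐ y, Tendsto (q · y) (𝓝[>] 0) (𝓝 (q₀ y)))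
    (hmid : ∀ s > 0, ∀ a b,
      2 * V (midpoint ℝ a b) - s ^ 2 * q s (midpoint ℝ a b) ≤ (V a - s * f a) + (V b + s * f b)) :
    Var[f; volume.tilted fun y => -V y] ≤ ∫ y, q₀ y ∂volume.tilted fun y => -V y := by
  have htilt (t : ℝ) : Integrable fun y => exp (-V y + t * f y) := by
    refine integrable_exp_of_le_sub_norm_sq (by fun_prop) hκ (C := |t| * C) fun y => ?_
    have htf : t * f y ≤ |t| * C * ‖y‖ := by
      rw [mul_assoc]
      exact (le_abs_self _).trans ((abs_mul t (f y)).trans_le (by gcongr; exact hfC y))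
    linarith [hVκ y]
  have hint : Integrable fun y => exp (-V y) := by simpa using htilt 0
  have := isProbabilityMeasure_tilted hint
  set Z := ∫ y, exp (-V y) with hZ
  refine variance_le_integral_of_mgf_mul_mgf_neg_le (fun t => ?_)
    (fun s hs => (hq s hs).aestronglyMeasurable) hqD
    ((tilted_absolutelyContinuous _ _).ae_le hlim) fun s hs => ?_
  · rw [integrable_tilted_iff hint]
    refine (htilt t).congr (.of_forall fun y => ?_)
    simp [exp_add]
  · have hw : Integrable fun y => exp (-V y + s ^ 2 / 2 * q s y) := by
      have := hq s hs
      refine (hint.mul_const (exp (s ^ 2 / 2 * D))).mono' (by fun_prop) (.of_forall fun y => ?_)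
      rw [norm_of_nonneg (exp_pos _).le, exp_add]
      gcongr
      exact (le_abs_self _).trans (hqD s hs y)
    have hPL := integral_exp_mul_integral_exp_le_sq (u := fun y => -V y + s * f y)
      (v := fun y => -V y + -s * f y) (w := fun y => -V y + s ^ 2 / 2 * q s y) (by fun_prop)
      (by fun_prop) (by have := hq s hs; fun_prop) hw fun a b => by linarith [hmid s hs a b]
    simp only [mgf, integral_exp_tilted, Pi.add_apply]
    rw [← hZ, div_mul_div_comm, div_pow, sq Z]
    gcongr

end VarianceInequality

section TiltedIntegral

variable {α : Type*} {mα : MeasurableSpace α} {μ : Measure α} {φ f q : α → ℝ}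

lemma integral_tilted_eq_inv_mul (φ f : α → ℝ) :
    ∫ x, f x ∂μ.tilted φ = (∫ x, exp (φ x) ∂μ)⁻¹ * ∫ x, f x * exp (φ x) ∂μ := by
  rw [integral_tilted, ← integral_const_mul]
  refine integral_congr_ae (.of_forall fun x => ?_)
  simp only [smul_eq_mul]
  ring

lemma integral_sq_mul_exp_le_of_variance_tilted_le [NeZero μ]
    (hφ : Integrable (fun x => exp (φ x)) μ) (hf : AEMeasurable f μ)
    (hmean : ∫ x, f x * exp (φ x) ∂μ = 0)
    (hvar : Var[f; μ.tilted φ] ≤ ∫ x, q x ∂μ.tilted φ) :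
    ∫ x, f x ^ 2 * exp (φ x) ∂μ ≤ ∫ x, q x * exp (φ x) ∂μ := by
  rw [variance_of_integral_eq_zero (hf.mono_ac (tilted_absolutelyContinuous μ φ))
    (by rw [integral_tilted_eq_inv_mul, hmean, mul_zero]), integral_tilted_eq_inv_mul,
    integral_tilted_eq_inv_mul] at hvar
  exact le_of_mul_le_mul_left hvar (inv_pos.2 (integral_exp_pos hφ))

end TiltedIntegral

section GaussianPoincare

variable {E : Type*} [NormedAddCommGroup E] [InnerProductSpace ℝ E]

/-- The largest value, over all `u`, of the symmetric difference quotient of `f` at `m` along `u`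
with step `s`, penalized by `‖u‖ ^ 2`. It is the smallest function which can serve as `q s` in
`variance_tilted_le_integral` for the Gaussian potential `V y = ‖y‖ ^ 2 / 2`. -/
def penalizedSlope (f : E → ℝ) (s : ℝ) (m : E) : ℝ :=
  ⨆ u : E, ((f (m + s • u) - f (m - s • u)) / s - ‖u‖ ^ 2)

section Lipschitz

variable {f : E → ℝ} {L : NNReal} {s : ℝ}

lemma symm_diff_quotient_le_of_lipschitzWith (hf : LipschitzWith L f) (hs : 0 < s) (m u : E) :
    (f (m + s • u) - f (m - s • u)) / s ≤ 2 * L * ‖u‖ := by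
  have h := (le_abs_self _).trans (hf.dist_le_mul (m + s • u) (m - s • u))
  rw [dist_eq_norm, show m + s • u - (m - s • u) = (2 * s) • u by module, norm_smul,
    norm_of_nonneg (by positivity)] at h
  rw [div_le_iff₀ hs]
  linarith

lemma symm_diff_quotient_sub_norm_sq_le (hf : LipschitzWith L f) (hs : 0 < s) (m u : E) :
    (f (m + s • u) - f (m - s • u)) / s - ‖u‖ ^ 2 ≤ L ^ 2 := by
  nlinarith [symm_diff_quotient_le_of_lipschitzWith hf hs m u, sq_nonneg (L - ‖u‖)]

lemma bddAbove_range_symm_diff_quotient_sub_norm_sq (hf : LipschitzWith L f) (hs : 0 < s)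
    (m : E) : BddAbove (Set.range fun u => (f (m + s • u) - f (m - s • u)) / s - ‖u‖ ^ 2) :=
  ⟨L ^ 2, Set.forall_mem_range.2 (symm_diff_quotient_sub_norm_sq_le hf hs m)⟩

lemma le_penalizedSlope (hf : LipschitzWith L f) (hs : 0 < s) (m u : E) :
    (f (m + s • u) - f (m - s • u)) / s - ‖u‖ ^ 2 ≤ penalizedSlope f s m :=
  le_ciSup (bddAbove_range_symm_diff_quotient_sub_norm_sq hf hs m) u

lemma abs_penalizedSlope_le (hf : LipschitzWith L f) (hs : 0 < s) (m : E) :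
    |penalizedSlope f s m| ≤ L ^ 2 := by
  have hnonneg : 0 ≤ penalizedSlope f s m := by simpa using le_penalizedSlope hf hs m 0
  rw [abs_of_nonneg hnonneg]
  exact ciSup_le (symm_diff_quotient_sub_norm_sq_le hf hs m)

lemma measurable_penalizedSlope [MeasurableSpace E] [BorelSpace E] (hf : LipschitzWith L f)
    (hs : 0 < s) : Measurable (penalizedSlope f s) := by
  have := hf.continuous
  exact (lowerSemicontinuous_ciSup (bddAbove_range_symm_diff_quotient_sub_norm_sq hf hs)
    fun u => (by fun_prop : Continuous _).lowerSemicontinuous).measurable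

lemma two_mul_norm_sq_sub_penalizedSlope_le (hf : LipschitzWith L f) (hs : 0 < s) (a b : E) :
    2 * (‖midpoint ℝ a b‖ ^ 2 / 2) - s ^ 2 * penalizedSlope f s (midpoint ℝ a b) ≤
      (‖a‖ ^ 2 / 2 - s * f a) + (‖b‖ ^ 2 / 2 + s * f b) := by
  have hslope := le_penalizedSlope hf hs (midpoint ℝ a b) ((1 / (2 * s)) • (a - b))
  rw [smul_smul, show s * (1 / (2 * s)) = 1 / 2 by field_simp, midpoint_eq_smul_add,
    invOf_eq_inv, show (2⁻¹ : ℝ) • (a + b) + (1 / 2 : ℝ) • (a - b) = a by module,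
    show (2⁻¹ : ℝ) • (a + b) - (1 / 2 : ℝ) • (a - b) = b by module, norm_smul,
    norm_of_nonneg (by positivity), mul_pow] at hslope
  have hscaled := mul_le_mul_of_nonneg_left hslope (sq_nonneg s)
  rw [show s ^ 2 * ((f a - f b) / s - (1 / (2 * s)) ^ 2 * ‖a - b‖ ^ 2) =
    s * (f a - f b) - ‖a - b‖ ^ 2 / 4 by field_simp; ring] at hscaled
  rw [midpoint_eq_smul_add, invOf_eq_inv, norm_smul, norm_of_nonneg (by norm_num)]
  linarith [parallelogram_law_with_norm ℝ a b]

end Lipschitz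

variable [CompleteSpace E]

lemma eventually_abs_symm_diff_quotient_sub_le {f : E → ℝ} {m : E} (hf : DifferentiableAt ℝ f m)
    (R : ℝ) {η : ℝ} (hη : 0 < η) : ∀ᶠ s in 𝓝[>] (0 : ℝ), ∀ u : E, ‖u‖ ≤ R →
      |(f (m + s • u) - f (m - s • u)) / s - 2 * ⟪gradient f m, u⟫_ℝ| ≤ 2 * η * ‖u‖ := by
  have hlittleO := hasFDerivAt_iff_isLittleO_nhds_zero.1 hf.hasGradientAt.hasFDerivAt
  obtain ⟨δ, hδ, hδf⟩ := Metric.eventually_nhds_iff.1 (hlittleO.def hη)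
  have hsmall : ∀ᶠ s in 𝓝[>] (0 : ℝ), s * R < δ := by
    have : Tendsto (fun s : ℝ => s * R) (𝓝 0) (𝓝 0) := by
      simpa using (continuous_mul_const R).tendsto 0
    exact nhdsWithin_le_nhds (this.eventually_lt_const hδ)
  filter_upwards [hsmall, self_mem_nhdsWithin] with s hsR hs u hu
  rw [Set.mem_Ioi] at hs
  have hnorm : ‖s • u‖ = s * ‖u‖ := by rw [norm_smul, norm_of_nonneg hs.le]
  have hlt : s * ‖u‖ < δ := (mul_le_mul_of_nonneg_left hu hs.le).trans_lt hsR
  have hplus := @hδf (s • u) (by simpa [hnorm] using hlt)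
  have hminus := @hδf (-(s • u)) (by simpa [hnorm] using hlt)
  simp only [norm_neg, hnorm, norm_eq_abs, InnerProductSpace.toDual_apply_apply, inner_neg_right,
    real_inner_smul_right, ← sub_eq_add_neg] at hplus hminus
  rw [show (f (m + s • u) - f (m - s • u)) / s - 2 * ⟪gradient f m, u⟫_ℝ =
    ((f (m + s • u) - f m - s * ⟪gradient f m, u⟫_ℝ) -
      (f (m - s • u) - f m - -(s * ⟪gradient f m, u⟫_ℝ))) / s by field_simp; ring,
    abs_div, abs_of_pos hs, div_le_iff₀ hs]
  refine (abs_sub _ _).trans ?_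
  linarith

-- Only `‖u‖ ≤ 2L + ‖∇f(m)‖` matter for the supremum, and on this ball the difference quotients
-- converge uniformly to `2⟪∇f(m), u⟫`, whose penalized supremum is attained at `u = ∇f(m)`.
lemma tendsto_penalizedSlope {f : E → ℝ} {L : NNReal} (hf : LipschitzWith L f) {m : E}
    (hm : DifferentiableAt ℝ f m) :
    Tendsto (penalizedSlope f · m) (𝓝[>] 0) (𝓝 (‖gradient f m‖ ^ 2)) := by
  set X := gradient f m
  have hbounds {η : ℝ} (hη : 0 < η) : ∀ᶠ s in 𝓝[>] 0,
      ‖X‖ ^ 2 - 2 * η * ‖X‖ ≤ penalizedSlope f s m ∧ penalizedSlope f s m ≤ (‖X‖ + η) ^ 2 := by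
    filter_upwards [eventually_abs_symm_diff_quotient_sub_le hm (2 * L + ‖X‖) hη,
      self_mem_nhdsWithin] with s happrox hs
    refine ⟨?_, ciSup_le fun u => ?_⟩
    · have hX := neg_le_of_abs_le (happrox X (by linarith [L.coe_nonneg]))
      rw [real_inner_self_eq_norm_sq] at hX
      linarith [le_penalizedSlope hf hs m X]
    · rcases le_or_gt ‖u‖ (2 * L + ‖X‖) with hu | hu
      · nlinarith [le_of_abs_le (happrox u hu), real_inner_le_norm X u,
          sq_nonneg (‖X‖ + η - ‖u‖)]
      · nlinarith [symm_diff_quotient_le_of_lipschitzWith hf hs m u, norm_nonneg X, norm_nonneg u,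
          sq_nonneg (‖X‖ + η)]
  have hlower : Tendsto (fun η : ℝ => ‖X‖ ^ 2 - 2 * η * ‖X‖) (𝓝[>] 0) (𝓝 (‖X‖ ^ 2)) :=
    ((by fun_prop : Continuous _).tendsto' 0 _ (by simp)).mono_left nhdsWithin_le_nhds
  have hupper : Tendsto (fun η : ℝ => (‖X‖ + η) ^ 2) (𝓝[>] 0) (𝓝 (‖X‖ ^ 2)) :=
    ((by fun_prop : Continuous _).tendsto' 0 _ (by simp)).mono_left nhdsWithin_le_nhds
  refine tendsto_order.2 ⟨fun a ha => ?_, fun a ha => ?_⟩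
  · obtain ⟨η, hηa, hη⟩ := ((hlower.eventually_const_lt ha).and self_mem_nhdsWithin).exists
    exact (hbounds hη).mono fun s hs => hηa.trans_le hs.1
  · obtain ⟨η, hηa, hη⟩ := ((hupper.eventually_lt_const ha).and self_mem_nhdsWithin).exists
    exact (hbounds hη).mono fun s hs => hs.2.trans_lt hηa

theorem variance_gaussian_le_integral_norm_gradient_sq [FiniteDimensional ℝ E] [MeasurableSpace E]
    [BorelSpace E] {f : E → ℝ} {L : NNReal} (hf : LipschitzWith L f) :
    Var[f; volume.tilted fun y => -(‖y‖ ^ 2 / 2)] ≤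
      ∫ y, ‖gradient f y‖ ^ 2 ∂volume.tilted fun y => -(‖y‖ ^ 2 / 2) := by
  wlog hf0 : f 0 = 0 generalizing f
  · have hprob : IsProbabilityMeasure (volume.tilted fun y : E => -(‖y‖ ^ 2 / 2)) :=
      isProbabilityMeasure_tilted (integrable_exp_of_le_sub_norm_sq (by fun_prop) one_half_pos
        (C := 0) fun y => by linarith)
    have h := this (f := fun y => f y - f 0) (by simpa using hf.sub (.const (f 0))) (sub_self _)
    simp only [gradient, fderiv_sub_const] at h
    rwa [variance_sub_const hf.continuous.aestronglyMeasurable] at h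
  exact variance_tilted_le_integral (κ := 1 / 2) one_half_pos (by fun_prop)
    hf.continuous.measurable (fun y => by linarith)
    (fun y => by simpa [hf0] using hf.dist_le_mul y 0)
    (fun _ hs => measurable_penalizedSlope hf hs) (fun _ hs => abs_penalizedSlope_le hf hs)
    (hf.ae_differentiableAt.mono fun _ hm => tendsto_penalizedSlope hf hm)
    fun _ hs => two_mul_norm_sq_sub_penalizedSlope_le hf hs

end GaussianPoincare

section Gradient

variable {E : Type*} [NormedAddCommGroup E] [InnerProductSpace ℝ E] [CompleteSpace E]

lemma contDiffOn_gradient_of_isOpen {f : E → ℝ} {s : Set E} {k m : WithTop ℕ∞}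
    (hf : ContDiffOn ℝ k f s) (hs : IsOpen s) (hmk : m + 1 ≤ k) : ContDiffOn ℝ m (gradient f) s :=
  (InnerProductSpace.toDual ℝ E).symm.toContinuousLinearEquiv.contDiff.comp_contDiffOn
    (hf.fderiv_of_isOpen hs hmk)

lemma hasGradientAt_norm {z : E} (hz : z ≠ 0) : HasGradientAt (fun w => ‖w‖) (‖z‖⁻¹ • z) z := by
  have hsqrt := (hasStrictFDerivAt_norm_sq z).hasFDerivAt.sqrt (by positivity)
  simp only [sqrt_sq (norm_nonneg _)] at hsqrt
  refine hasGradientAt_iff_hasFDerivAt.2 (hsqrt.congr_fderiv ?_)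
  ext w
  simp only [one_div, mul_inv_rev, smul_apply, coe_innerSL_apply, nsmul_eq_mul, Nat.cast_ofNat,
    smul_eq_mul, map_smul, InnerProductSpace.toDual_apply_apply]
  field_simp

end Gradient

section PosHomogeneous

/-- Positive homogeneity of degree `k`: `f (ρ • x) = ρ ^ k • f x` for all `ρ > 0`. The functions
attached to a support function are homogeneous, which lets integrals over the sphere be traded for
Gaussian integrals over the whole space. -/
def PosHomogeneous {E F : Type*} [SMul ℝ E] [SMul ℝ F] (k : ℕ) (f : E → F) : Prop :=
  ∀ ⦃ρ : ℝ⦄, 0 < ρ → ∀ x, f (ρ • x) = ρ ^ k • f x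

variable {E F : Type*} [NormedAddCommGroup E] [NormedAddCommGroup F] [NormedSpace ℝ F] {k l : ℕ}

lemma posHomogeneous_norm [NormedSpace ℝ E] : PosHomogeneous 1 fun x : E => ‖x‖ :=
  fun ρ hρ x => by simp [norm_smul, abs_of_pos hρ]

namespace PosHomogeneous

section NormedSpace

variable [NormedSpace ℝ E]

protected lemma sub {f g : E → F} (hf : PosHomogeneous k f) (hg : PosHomogeneous k g) :
    PosHomogeneous k fun x => f x - g x :=
  fun ρ hρ x => by simp only [hf hρ, hg hρ, smul_sub]

protected lemma smul {c : E → ℝ} {f : E → F} (hc : PosHomogeneous k c) (hf : PosHomogeneous l f) :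
    PosHomogeneous (k + l) fun x => c x • f x :=
  fun ρ hρ x => by
    simp only [hc hρ, hf hρ, pow_add, smul_eq_mul, mul_smul, smul_comm (c x)]

protected lemma mul {f g : E → ℝ} (hf : PosHomogeneous k f) (hg : PosHomogeneous l g) :
    PosHomogeneous (k + l) fun x => f x * g x :=
  hf.smul hg

protected lemma pow {f : E → ℝ} (hf : PosHomogeneous k f) (m : ℕ) :
    PosHomogeneous (k * m) fun x => f x ^ m :=
  fun ρ hρ x => by simp only [hf hρ, smul_eq_mul, mul_pow, pow_mul]

protected lemma norm {f : E → F} (hf : PosHomogeneous k f) : PosHomogeneous k fun x => ‖f x‖ :=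
  fun ρ hρ x => by
    simp only [hf hρ, norm_smul, norm_pow, norm_of_nonneg hρ.le, smul_eq_mul]

lemma clm_apply {f : E → F} (hf : PosHomogeneous k f) {G : Type*} [NormedAddCommGroup G]
    [NormedSpace ℝ G] (T : F →L[ℝ] G) : PosHomogeneous k fun x => T (f x) :=
  fun ρ hρ x => by simp only [hf hρ, map_smul]

lemma map_zero {f : E → F} (hf : PosHomogeneous (k + 1) f) : f 0 = 0 := by
  have h := hf two_pos 0
  rw [smul_zero] at h
  by_contra hne
  exact (one_lt_pow₀ (one_lt_two (α := ℝ)) k.succ_ne_zero).ne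
    (smul_left_injective ℝ hne (by simpa using h))

protected lemma fderiv {f : E → F} (hf : PosHomogeneous (k + 1) f) :
    PosHomogeneous k (fderiv ℝ f) := by
  intro ρ hρ x
  have h : ρ • fderiv ℝ f (ρ • x) = ρ ^ (k + 1) • fderiv ℝ f x := by
    rw [← fderiv_comp_smul, ← Pi.smul_apply, ← fderiv_const_smul_field]
    exact congrArg (fderiv ℝ · x) (funext (hf hρ))
  rwa [pow_succ', mul_smul, smul_right_inj hρ.ne'] at h

lemma apply_eq_norm_pow_smul {f : E → F} (hf : PosHomogeneous k f) {x : E} (hx : x ≠ 0) :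
    f x = ‖x‖ ^ k • f (‖x‖⁻¹ • x) := by
  rw [← hf (norm_pos_iff.2 hx), smul_smul, mul_inv_cancel₀ (norm_ne_zero_iff.2 hx), one_smul]

lemma exists_norm_le [ProperSpace E] {f : E → F} (hf : PosHomogeneous k f)
    (hfc : ContinuousOn f {0}ᶜ) : ∃ C, 0 ≤ C ∧ ∀ x ≠ 0, ‖f x‖ ≤ C * ‖x‖ ^ k := by
  obtain ⟨C, hC⟩ := (isCompact_sphere (0 : E) 1).exists_bound_of_continuousOn
    (hfc.mono fun x hx => ne_zero_of_mem_unit_sphere ⟨x, hx⟩)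
  refine ⟨max C 0, le_max_right _ _, fun x hx => ?_⟩
  rw [hf.apply_eq_norm_pow_smul hx, norm_smul, norm_of_nonneg (by positivity), mul_comm]
  gcongr
  exact (hC _ (by simp [norm_smul, hx])).trans (le_max_left _ _)

lemma exists_mul_norm_pow_le [ProperSpace E] [Nontrivial E] {f : E → ℝ}
    (hf : PosHomogeneous k f) (hfc : ContinuousOn f {0}ᶜ) (hpos : ∀ x ≠ 0, 0 < f x) :
    ∃ δ > 0, ∀ x ≠ 0, δ * ‖x‖ ^ k ≤ f x := by
  obtain ⟨x₀, hx₀, hmin⟩ := (isCompact_sphere (0 : E) 1).exists_isMinOn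
    (NormedSpace.sphere_nonempty.2 zero_le_one)
    (hfc.mono fun x hx => ne_zero_of_mem_unit_sphere ⟨x, hx⟩)
  refine ⟨f x₀, hpos _ (ne_zero_of_mem_unit_sphere ⟨x₀, hx₀⟩), fun x hx => ?_⟩
  rw [hf.apply_eq_norm_pow_smul hx, smul_eq_mul, mul_comm]
  gcongr
  exact hmin (by simp [norm_smul, hx])

lemma hasFDerivAt_zero_of_two_le [ProperSpace E] {f : E → F} (hf : PosHomogeneous (k + 2) f)
    (hfc : ContinuousOn f {0}ᶜ) : HasFDerivAt f (0 : E →L[ℝ] F) 0 := by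
  obtain ⟨C, -, hC⟩ := hf.exists_norm_le hfc
  refine Asymptotics.IsBigO.hasFDerivAt (𝕜 := ℝ) (n := k + 2) ?_ (by lia)
  refine Asymptotics.IsBigO.of_bound C (.of_forall fun z => ?_)
  rcases eq_or_ne z 0 with rfl | hz
  · simp [hf.map_zero]
  · simpa using hC z hz

lemma hasFDerivAt_apply_self {f : E → F} {f' : E →L[ℝ] F} {x : E} (hf : PosHomogeneous k f)
    (hf' : HasFDerivAt f f' x) : f' x = (k : ℝ) • f x := by
  have hray : HasDerivAt (fun t : ℝ => t • x) x 1 := by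
    simpa using (hasDerivAt_id (1 : ℝ)).smul_const x
  have hpow : HasDerivAt (fun t : ℝ => t ^ k • f x) ((k : ℝ) • f x) 1 := by
    simpa using (hasDerivAt_pow k (1 : ℝ)).smul_const (f x)
  refine (((one_smul ℝ x).symm ▸ hf').comp_hasDerivAt (1 : ℝ) hray).unique
    (hpow.congr_of_eventuallyEq ?_)
  filter_upwards [lt_mem_nhds one_pos] with t ht using hf ht x

lemma exists_lipschitzWith [ProperSpace E] {f : E → F} (hf : PosHomogeneous 1 f)
    (hfc : ContDiffOn ℝ 1 f {0}ᶜ) : ∃ L, LipschitzWith L f := by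
  obtain ⟨C, hC0, hC⟩ := hf.exists_norm_le hfc.continuousOn
  obtain ⟨D, -, hD⟩ := hf.fderiv.exists_norm_le
    (hfc.continuousOn_fderiv_of_isOpen isOpen_compl_singleton le_rfl)
  have hC' : ∀ x, ‖f x‖ ≤ C * ‖x‖ := fun x => by
    rcases eq_or_ne x 0 with rfl | hx
    · simp [hf.map_zero]
    · simpa using hC x hx
  refine ⟨⟨max C D, by positivity⟩, LipschitzWith.of_dist_le_mul fun x y => ?_⟩
  change _ ≤ max C D * dist x y
  by_cases h0 : (0 : E) ∈ segment ℝ y x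
  · calc dist (f x) (f y) ≤ C * dist x 0 + C * dist 0 y := by
          simpa [dist_eq_norm] using (norm_sub_le _ _).trans (add_le_add (hC' x) (hC' y))
      _ = C * dist x y := by
          rw [← mul_add, dist_comm x 0, dist_comm 0 y, dist_comm x y, add_comm,
            dist_add_dist_of_mem_segment h0]
      _ ≤ max C D * dist x y := by gcongr; exact le_max_left _ _
  · have hne : ∀ z ∈ segment ℝ y x, z ≠ 0 := fun z hz h => h0 (h ▸ hz)
    rw [dist_eq_norm, dist_eq_norm]
    refine ((convex_segment y x).norm_image_sub_le_of_norm_fderiv_le (𝕜 := ℝ) (C := D)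
      (fun z hz => (hfc.differentiableOn one_ne_zero).differentiableAt
        (isOpen_compl_singleton.mem_nhds (hne z hz)))
      (fun z hz => by simpa using hD z (hne z hz)) (left_mem_segment _ _ _)
      (right_mem_segment _ _ _)).trans ?_
    gcongr
    exact le_max_right _ _

end NormedSpace

section InnerProductSpace

variable [InnerProductSpace ℝ E]

lemma inner_left {f : E → E} (hf : PosHomogeneous k f) (e : E) :
    PosHomogeneous k fun x => ⟪f x, e⟫_ℝ :=
  fun ρ hρ x => by simp only [hf hρ, real_inner_smul_left, smul_eq_mul]

protected lemma gradient [CompleteSpace E] {f : E → ℝ} (hf : PosHomogeneous (k + 1) f) :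
    PosHomogeneous k (gradient f) :=
  fun ρ hρ x => by simp only [gradient, hf.fderiv hρ x, map_smul]

lemma inner_gradient_self [CompleteSpace E] {f : E → ℝ} (hf : PosHomogeneous k f) {x : E}
    (hd : DifferentiableAt ℝ f x) : ⟪x, gradient f x⟫_ℝ = k * f x := by
  simpa [real_inner_comm x] using hf.hasFDerivAt_apply_self hd.hasGradientAt.hasFDerivAt

lemma norm_gradient_sub_mul_norm_sq [CompleteSpace E] {f : E → ℝ} (hf : PosHomogeneous 1 f)
    {x : sphere (0 : E) 1} (hd : DifferentiableAt ℝ f x) (T : ℝ) :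
    ‖gradient (fun z => f z - T * ‖z‖) x‖ ^ 2 = (f x - T) ^ 2 + (‖gradient f x‖ ^ 2 - f x ^ 2) := by
  have hgrad : gradient (fun z => f z - T * ‖z‖) x = gradient f x - T • (x : E) := by
    refine HasGradientAt.gradient (hasGradientAt_iff_hasFDerivAt.2 ?_)
    rw [map_sub, map_smul]
    have hnorm := hasGradientAt_norm (ne_zero_of_mem_unit_sphere x)
    rw [norm_eq_of_mem_sphere, inv_one, one_smul] at hnorm
    exact hd.hasGradientAt.hasFDerivAt.sub (hnorm.hasFDerivAt.const_mul T)
  have heuler : ⟪gradient f x, (x : E)⟫_ℝ = f x := by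
    simpa [real_inner_comm] using hf.inner_gradient_self hd
  rw [hgrad, norm_sub_sq_real, real_inner_smul_right, heuler, norm_smul, norm_eq_of_mem_sphere,
    mul_one, norm_eq_abs, sq_abs]
  ring

end InnerProductSpace

end PosHomogeneous

lemma posHomogeneous_inner [InnerProductSpace ℝ E] (e : E) :
    PosHomogeneous 1 fun x => ⟪x, e⟫_ℝ :=
  PosHomogeneous.inner_left (f := id) (fun ρ _ x => by simp) e

end PosHomogeneous

section PolarCoordinates

/-- The half-line Gaussian moment `∫₀^∞ ρ ^ m * exp (-ρ ^ 2 / 2) dρ`, the radial factor of the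
Gaussian integral of a homogeneous function. -/
def halfGaussianMoment (m : ℕ) : ℝ := ∫ ρ in Set.Ioi (0 : ℝ), ρ ^ m * exp (-(ρ ^ 2 / 2))

lemma halfGaussianMoment_eq (m : ℕ) : halfGaussianMoment m =
    (1 / 2 : ℝ) ^ (-((m : ℝ) + 1) / 2) * (1 / 2) * Gamma (((m : ℝ) + 1) / 2) := by
  rw [halfGaussianMoment, ← integral_rpow_mul_exp_neg_mul_rpow two_pos
    (by linarith [m.cast_nonneg (α := ℝ)]) one_half_pos]
  refine setIntegral_congr_fun measurableSet_Ioi fun x _ => ?_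
  simp only [rpow_natCast, rpow_two]
  ring_nf

lemma halfGaussianMoment_pos (m : ℕ) : 0 < halfGaussianMoment m := by
  have := Gamma_pos_of_pos (s := ((m : ℝ) + 1) / 2) (by positivity)
  rw [halfGaussianMoment_eq]
  positivity

lemma halfGaussianMoment_add_two (m : ℕ) :
    halfGaussianMoment (m + 2) = (m + 1) * halfGaussianMoment m := by
  rw [halfGaussianMoment_eq, halfGaussianMoment_eq,
    show (((m + 2 : ℕ) : ℝ) + 1) / 2 = ((m : ℝ) + 1) / 2 + 1 by push_cast; ring,
    show -(((m + 2 : ℕ) : ℝ) + 1) / 2 = -((m : ℝ) + 1) / 2 + (-1) by push_cast; ring,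
    Gamma_add_one (by positivity), rpow_add (by norm_num), rpow_neg_one]
  ring

lemma integral_pow_mul_exp_neg_mul_sq (m : ℕ) {b : ℝ} (hb : 0 < b) :
    ∫ ρ in Set.Ioi (0 : ℝ), ρ ^ m * exp (-((b * ρ) ^ 2 / 2)) =
      halfGaussianMoment m / b ^ (m + 1) := by
  have hsubst := integral_comp_mul_left_Ioi (fun y : ℝ => y ^ m * exp (-(y ^ 2 / 2))) 0 hb
  simp only [mul_zero, smul_eq_mul, mul_pow b, mul_assoc, integral_const_mul] at hsubst
  rw [halfGaussianMoment, eq_div_iff (by positivity), pow_succ, ← mul_inv_cancel_left₀ hb.ne'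
    (∫ ρ in Set.Ioi (0 : ℝ), ρ ^ m * exp (-(ρ ^ 2 / 2))), ← hsubst]
  simp only [mul_pow b]
  ring

lemma continuous_comp_sphere_coe {E F : Type*} [NormedAddCommGroup E] [NormedSpace ℝ E]
    [TopologicalSpace F] {f : E → F}
    (hf : ContinuousOn f {0}ᶜ) : Continuous fun x : sphere (0 : E) 1 => f x :=
  hf.comp_continuous continuous_subtype_val ne_zero_of_mem_unit_sphere

variable {E : Type*} [NormedAddCommGroup E] [MeasurableSpace E] [BorelSpace E]

lemma integral_eq_integral_toSphere_integral_Ioi [NormedSpace ℝ E] [FiniteDimensional ℝ E]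
    [Nontrivial E] (μ : Measure E) [μ.IsAddHaarMeasure] {F : Type*} [NormedAddCommGroup F]
    [NormedSpace ℝ F] {G : E → F} (hG : Integrable G μ) :
    ∫ z, G z ∂μ = ∫ x : sphere (0 : E) 1, (∫ ρ in Set.Ioi (0 : ℝ),
      ρ ^ (finrank ℝ E - 1) • G (ρ • (x : E))) ∂μ.toSphere := by
  set g : sphere (0 : E) 1 × Set.Ioi (0 : ℝ) → F := fun p => G (p.2.1 • (p.1 : E))
  have hg (x : ({0}ᶜ : Set E)) : g (homeomorphUnitSphereProd E x) = G x.1 := by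
    have hx : ‖x.1‖ ≠ 0 := norm_ne_zero_iff.2 x.2
    simp [g, smul_smul, hx]
  have hG' : Integrable (fun x : ({0}ᶜ : Set E) => G x) (μ.comap (↑)) :=
    (integrableOn_iff_comap_subtypeVal (measurableSet_singleton (0 : E)).compl).1 hG.integrableOn
  have hemb := (homeomorphUnitSphereProd E).measurableEmbedding
  have hint := μ.measurePreserving_homeomorphUnitSphereProd.integral_comp hemb g
  have hinteg := μ.measurePreserving_homeomorphUnitSphereProd.integrable_comp_emb hemb (g := g)
  simp only [hg, Function.comp_def] at hint hinteg
  have hpunctured : ∫ z, G z ∂μ = ∫ x : ({0}ᶜ : Set E), G x ∂μ.comap (↑) := by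
    rw [integral_subtype_comap (measurableSet_singleton _).compl G, restrict_compl_singleton]
  rw [hpunctured, hint, integral_prod _ (hinteg.1 hG')]
  refine integral_congr_ae (.of_forall fun x => ?_)
  simp only [g, Measure.volumeIoiPow, ENNReal.ofReal]
  rw [integral_withDensity_eq_integral_smul, integral_subtype_comap measurableSet_Ioi fun a =>
    Real.toNNReal (a ^ (finrank ℝ E - 1)) • G (a • (x : E)),
    setIntegral_congr_fun measurableSet_Ioi fun ρ hρ => ?_]
  · rw [NNReal.smul_def, coe_toNNReal _ (pow_nonneg hρ.out.le _)]
  · exact (Measurable.pow_const measurable_subtype_coe _).real_toNNReal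

lemma integrable_toSphere_of_continuousOn [NormedSpace ℝ E] [FiniteDimensional ℝ E]
    (μ : Measure E) [μ.IsAddHaarMeasure] {F : Type*} [NormedAddCommGroup F] {f : E → F}
    (hf : ContinuousOn f {0}ᶜ) : Integrable (fun x : sphere (0 : E) 1 => f x) μ.toSphere :=
  (continuous_comp_sphere_coe hf).integrable_of_hasCompactSupport (.of_compactSpace _)

end PolarCoordinates

section HomogeneousGaussian

variable {E : Type*} [NormedAddCommGroup E] [NormedSpace ℝ E] [FiniteDimensional ℝ E]
  [MeasurableSpace E] [BorelSpace E] (μ : Measure E) [μ.IsAddHaarMeasure] {n k : ℕ} {F b : E → ℝ}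

lemma integrable_norm_pow_mul_exp_neg (k : ℕ) {c : ℝ} (hc : 0 < c) :
    Integrable (fun z : E => ‖z‖ ^ k * exp (-(c * ‖z‖ ^ 2))) μ := by
  nontriviality E
  refine (integrable_fun_norm_addHaar μ (f := fun ρ : ℝ => ρ ^ k * exp (-(c * ρ ^ 2)))).2 ?_
  have h := integrableOn_rpow_mul_exp_neg_mul_sq hc (s := (finrank ℝ E - 1 + k : ℕ))
    (neg_one_lt_zero.trans_le (Nat.cast_nonneg _))
  refine h.congr_fun (fun ρ _ => ?_) measurableSet_Ioi
  simp only [rpow_natCast, pow_add, smul_eq_mul]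
  ring_nf

lemma PosHomogeneous.integrable_mul_exp_neg_sq [Nontrivial E] (hF : PosHomogeneous k F)
    (hFc : ContinuousOn F {0}ᶜ) (hb : PosHomogeneous 1 b) (hbc : ContinuousOn b {0}ᶜ)
    (hbpos : ∀ x ≠ 0, 0 < b x) : Integrable (fun z => F z * exp (-(b z ^ 2 / 2))) μ := by
  obtain ⟨C, hC₀, hC⟩ := hF.exists_norm_le hFc
  obtain ⟨δ, hδ, hδb⟩ := hb.exists_mul_norm_pow_le hbc hbpos
  refine ((integrable_norm_pow_mul_exp_neg μ k (by positivity : 0 < δ ^ 2 / 2)).const_mul C).mono'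
    ?_ ?_
  · rw [← restrict_compl_singleton (μ := μ) 0]
    refine ContinuousOn.aestronglyMeasurable ?_ (measurableSet_singleton _).compl
    exact hFc.mul (continuous_exp.comp_continuousOn ((hbc.pow 2).div_const 2).neg)
  · filter_upwards [Measure.ae_ne μ (0 : E)] with z hz
    have hsq : (δ * ‖z‖) ^ 2 ≤ b z ^ 2 := by
      gcongr
      simpa using hδb z hz
    rw [norm_mul, norm_of_nonneg (exp_pos _).le, ← mul_assoc]
    exact mul_le_mul (hC z hz) (exp_le_exp.2 (by linarith)) (exp_pos _).le (by positivity)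

lemma PosHomogeneous.integral_mul_exp_neg_sq (hn : finrank ℝ E = n + 1)
    (hF : PosHomogeneous k F) (hFc : ContinuousOn F {0}ᶜ) (hb : PosHomogeneous 1 b)
    (hbc : ContinuousOn b {0}ᶜ) (hbpos : ∀ x ≠ 0, 0 < b x) :
    ∫ z, F z * exp (-(b z ^ 2 / 2)) ∂μ = halfGaussianMoment (n + k) *
      ∫ x : sphere (0 : E) 1, F x / b x ^ (n + k + 1) ∂μ.toSphere := by
  have : Nontrivial E := nontrivial_of_finrank_eq_succ hn
  rw [integral_eq_integral_toSphere_integral_Ioi μ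
    (hF.integrable_mul_exp_neg_sq μ hFc hb hbc hbpos), ← integral_const_mul, hn, Nat.add_sub_cancel]
  refine integral_congr_ae (.of_forall fun x => ?_)
  have hradial : ∀ ρ ∈ Set.Ioi (0 : ℝ),
      ρ ^ n • (F (ρ • (x : E)) * exp (-(b (ρ • (x : E)) ^ 2 / 2))) =
        F x * (ρ ^ (n + k) * exp (-((b x * ρ) ^ 2 / 2))) := by
    intro ρ hρ
    rw [hF hρ, hb hρ, smul_eq_mul, smul_eq_mul, smul_eq_mul]
    ring_nf
  simp only
  rw [setIntegral_congr_fun measurableSet_Ioi hradial, integral_const_mul,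
    integral_pow_mul_exp_neg_mul_sq _ (hbpos _ (ne_zero_of_mem_unit_sphere x))]
  ring

lemma PosHomogeneous.integrable_mul_exp_neg_norm_sq [Nontrivial E] (hF : PosHomogeneous k F)
    (hFc : ContinuousOn F {0}ᶜ) : Integrable (fun z => F z * exp (-(‖z‖ ^ 2 / 2))) μ :=
  hF.integrable_mul_exp_neg_sq μ hFc posHomogeneous_norm continuous_norm.continuousOn
    fun _ => norm_pos_iff.2

lemma PosHomogeneous.integral_mul_exp_neg_norm_sq (hn : finrank ℝ E = n + 1)
    (hF : PosHomogeneous k F) (hFc : ContinuousOn F {0}ᶜ) :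
    ∫ z, F z * exp (-(‖z‖ ^ 2 / 2)) ∂μ =
      halfGaussianMoment (n + k) * ∫ x : sphere (0 : E) 1, F x ∂μ.toSphere := by
  rw [hF.integral_mul_exp_neg_sq μ hn hFc posHomogeneous_norm continuous_norm.continuousOn
    fun _ => norm_pos_iff.2]
  simp

end HomogeneousGaussian

section SphereCalculus

variable {E : Type*} [NormedAddCommGroup E] [InnerProductSpace ℝ E] [FiniteDimensional ℝ E]
  [MeasurableSpace E] [BorelSpace E] {n k : ℕ}

lemma integral_fderiv_mul_exp_neg_norm_sq {G : E → ℝ} {e : E} (hG : Differentiable ℝ G)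
    (hderiv : Integrable fun z => fderiv ℝ G z e * exp (-(‖z‖ ^ 2 / 2)))
    (hinner : Integrable fun z => G z * ⟪z, e⟫_ℝ * exp (-(‖z‖ ^ 2 / 2)))
    (hint : Integrable fun z => G z * exp (-(‖z‖ ^ 2 / 2))) :
    ∫ z, fderiv ℝ G z e * exp (-(‖z‖ ^ 2 / 2)) = ∫ z, G z * ⟪z, e⟫_ℝ * exp (-(‖z‖ ^ 2 / 2)) := by
  have hexp (z : E) : HasFDerivAt (fun z : E => exp (-(‖z‖ ^ 2 / 2)))
      (-(exp (-(‖z‖ ^ 2 / 2)) • innerSL ℝ z)) z := by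
    have h := ((hasStrictFDerivAt_norm_sq z).hasFDerivAt.mul_const (1 / 2 : ℝ)).fun_neg.exp
    simp only [mul_one_div] at h
    convert h using 1
    ext v
    simp
  have hexp_apply (z : E) : fderiv ℝ (fun z : E => exp (-(‖z‖ ^ 2 / 2))) z e =
      -(⟪z, e⟫_ℝ * exp (-(‖z‖ ^ 2 / 2))) := by
    simp [(hexp z).fderiv, mul_comm]
  have hparts := integral_mul_fderiv_eq_neg_fderiv_mul_of_integrable (μ := volume) (f := G)
    (g := fun z => exp (-(‖z‖ ^ 2 / 2))) (v := e) hderiv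
    (by simpa only [hexp_apply, mul_neg, ← mul_assoc] using hinner.fun_neg) hint (fun x _ => hG x)
    (fun x _ => (hexp x).differentiableAt)
  simp only [hexp_apply, mul_neg, ← mul_assoc, integral_neg, neg_inj] at hparts
  exact hparts.symm

lemma integral_fderiv_toSphere_of_differentiable (hn : finrank ℝ E = n + 1) {F : E → ℝ}
    (hF : PosHomogeneous (k + 1) F) (hFd : Differentiable ℝ F) (hFc : ContDiffOn ℝ 1 F {0}ᶜ)
    (e : E) : ∫ x : sphere (0 : E) 1, fderiv ℝ F x e ∂(volume : Measure E).toSphere =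
      (n + k + 1) *
        ∫ x : sphere (0 : E) 1, F x * ⟪(x : E), e⟫_ℝ ∂(volume : Measure E).toSphere := by
  have : Nontrivial E := nontrivial_of_finrank_eq_succ hn
  have hderiv : PosHomogeneous k fun z => fderiv ℝ F z e :=
    hF.fderiv.clm_apply (ContinuousLinearMap.apply ℝ ℝ e)
  have hderiv_cont : ContinuousOn (fun z => fderiv ℝ F z e) {0}ᶜ :=
    (hFc.continuousOn_fderiv_of_isOpen isOpen_compl_singleton le_rfl).clm_apply continuousOn_const
  have hinner := hF.mul (posHomogeneous_inner e)
  have hcont : ContinuousOn F {0}ᶜ := hFc.continuousOn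
  have hinner_cont : ContinuousOn (fun z => F z * ⟪z, e⟫_ℝ) {0}ᶜ := by fun_prop
  have hparts := integral_fderiv_mul_exp_neg_norm_sq (e := e) hFd
    (hderiv.integrable_mul_exp_neg_norm_sq _ hderiv_cont)
    (hinner.integrable_mul_exp_neg_norm_sq _ hinner_cont)
    (hF.integrable_mul_exp_neg_norm_sq _ hcont)
  rw [hderiv.integral_mul_exp_neg_norm_sq _ hn hderiv_cont,
    hinner.integral_mul_exp_neg_norm_sq _ hn hinner_cont,
    show n + (k + 1 + 1) = n + k + 2 by ring, halfGaussianMoment_add_two, mul_comm (_ + 1),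
    mul_assoc] at hparts
  simpa using mul_left_cancel₀ (halfGaussianMoment_pos _).ne' hparts

-- `F` need not be differentiable at the origin, but `‖z‖ ^ 2 * F z` is.
lemma integral_fderiv_toSphere (hn : finrank ℝ E = n + 1) {F : E → ℝ}
    (hF : PosHomogeneous (k + 1) F) (hFc : ContDiffOn ℝ 1 F {0}ᶜ) (e : E) :
    ∫ x : sphere (0 : E) 1, fderiv ℝ F x e ∂(volume : Measure E).toSphere =
      (n + k + 1) *
        ∫ x : sphere (0 : E) 1, F x * ⟪(x : E), e⟫_ℝ ∂(volume : Measure E).toSphere := by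
  let G : E → ℝ := fun z => F z * ‖z‖ ^ 2
  have hGhom : PosHomogeneous (k + 2 + 1) G := hF.mul (posHomogeneous_norm.pow 2)
  have hGderiv {z : E} (hz : z ≠ 0) :
      HasFDerivAt G (F z • (2 • innerSL ℝ z) + ‖z‖ ^ 2 • fderiv ℝ F z) z :=
    ((hFc.contDiffAt (isOpen_compl_singleton.mem_nhds hz)).differentiableAt
      one_ne_zero).hasFDerivAt.mul (hasStrictFDerivAt_norm_sq z).hasFDerivAt
  have hGdiff : Differentiable ℝ G := fun z => by
    rcases eq_or_ne z 0 with rfl | hz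
    · exact (hGhom.hasFDerivAt_zero_of_two_le
        (hFc.continuousOn.mul (by fun_prop))).differentiableAt
    · exact (hGderiv hz).differentiableAt
  have hsphere (x : sphere (0 : E) 1) :
      fderiv ℝ G x e = fderiv ℝ F x e + 2 * (F x * ⟪(x : E), e⟫_ℝ) := by
    simp only [(hGderiv (ne_zero_of_mem_unit_sphere x)).fderiv, norm_eq_of_mem_sphere, one_pow,
      one_smul, add_apply, smul_apply, coe_innerSL_apply, nsmul_eq_mul, Nat.cast_ofNat, smul_eq_mul]
    ring
  have hparts := integral_fderiv_toSphere_of_differentiable hn hGhom hGdiff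
    (hFc.mul (contDiff_norm_sq ℝ).contDiffOn) e
  simp only [hsphere] at hparts
  simp only [G, norm_eq_of_mem_sphere, one_pow, mul_one] at hparts
  rw [integral_add, integral_const_mul] at hparts
  · push_cast at hparts
    linarith
  · exact integrable_toSphere_of_continuousOn volume
      ((hFc.continuousOn_fderiv_of_isOpen isOpen_compl_singleton le_rfl).clm_apply
        continuousOn_const)
  · exact integrable_toSphere_of_continuousOn volume ((hFc.continuousOn.mul
      (by fun_prop : ContinuousOn (fun z : E => ⟪z, e⟫_ℝ) _)).const_smul (2 : ℝ))

lemma integral_mul_inner_fderiv_gradient_toSphere (hn : finrank ℝ E = n + 1) {f g : E → ℝ}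
    (hf : PosHomogeneous 1 f) (hfc : ContDiffOn ℝ 1 f {0}ᶜ) (hg : PosHomogeneous 1 g)
    (hgc : ContDiffOn ℝ 2 g {0}ᶜ) (e : E) :
    ∫ x : sphere (0 : E) 1, f x * ⟪e, fderiv ℝ (gradient g) x e⟫_ℝ
        ∂(volume : Measure E).toSphere =
      (n + 1) * ∫ x : sphere (0 : E) 1, f x * (⟪(x : E), e⟫_ℝ * ⟪e, gradient g x⟫_ℝ)
        ∂(volume : Measure E).toSphere -
      ∫ x : sphere (0 : E) 1, ⟪gradient f x, e⟫_ℝ * ⟪e, gradient g x⟫_ℝ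
        ∂(volume : Measure E).toSphere := by
  have hgrad : ContDiffOn ℝ 1 (gradient g) {0}ᶜ :=
    contDiffOn_gradient_of_isOpen hgc isOpen_compl_singleton (by norm_num)
  have hgrad_f : ContinuousOn (gradient f) {0}ᶜ :=
    (contDiffOn_gradient_of_isOpen (m := 0) hfc isOpen_compl_singleton le_rfl).continuousOn
  have hhess : ContinuousOn (fderiv ℝ (gradient g)) {0}ᶜ :=
    hgrad.continuousOn_fderiv_of_isOpen isOpen_compl_singleton le_rfl
  have hderiv (x : sphere (0 : E) 1) : fderiv ℝ (fun z => f z * ⟪gradient g z, e⟫_ℝ) x e =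
      f x * ⟪e, fderiv ℝ (gradient g) x e⟫_ℝ + ⟪gradient f x, e⟫_ℝ * ⟪e, gradient g x⟫_ℝ := by
    have hx := isOpen_compl_singleton.mem_nhds (ne_zero_of_mem_unit_sphere x)
    have hfx := (hfc.contDiffAt hx).differentiableAt one_ne_zero
    have hgx := (hgrad.contDiffAt hx).differentiableAt one_ne_zero
    rw [(hfx.hasGradientAt.hasFDerivAt.fun_mul
      (hgx.hasFDerivAt.inner ℝ (hasFDerivAt_const e _))).fderiv]
    simp [fderivInnerCLM_apply, real_inner_comm e, mul_comm]
  have hparts := integral_fderiv_toSphere (k := 0) hn (hf.mul ((hg.gradient (k := 0)).inner_left e))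
    (hfc.mul (hgrad.inner ℝ contDiffOn_const)) e
  simp only [hderiv] at hparts
  have hcont_f := hfc.continuousOn
  have hcont_g := hgrad.continuousOn
  rw [integral_add
    (integrable_toSphere_of_continuousOn volume
      (f := fun x => f x * ⟪e, fderiv ℝ (gradient g) x e⟫_ℝ) (by fun_prop))
    (integrable_toSphere_of_continuousOn volume
      (f := fun x => ⟪gradient f x, e⟫_ℝ * ⟪e, gradient g x⟫_ℝ) (by fun_prop))] at hparts
  rw [eq_sub_of_add_eq hparts, Nat.cast_zero, add_zero]
  congr! 4 with x
  rw [real_inner_comm e, mul_assoc, mul_comm ⟪e, _⟫_ℝ]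

-- Green's formula on the sphere, in terms of the full gradients of the homogeneous extensions.
lemma integral_mul_trace_fderiv_gradient_toSphere (hn : finrank ℝ E = n + 1) {f g : E → ℝ}
    (hf : PosHomogeneous 1 f) (hfc : ContDiffOn ℝ 1 f {0}ᶜ) (hg : PosHomogeneous 1 g)
    (hgc : ContDiffOn ℝ 2 g {0}ᶜ) :
    ∫ x : sphere (0 : E) 1, f x * (fderiv ℝ (gradient g) (x : E) : E →ₗ[ℝ] E).trace ℝ E
        ∂(volume : Measure E).toSphere =
      (n + 1) * ∫ x : sphere (0 : E) 1, f x * g x ∂(volume : Measure E).toSphere -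
        ∫ x : sphere (0 : E) 1, ⟪gradient f x, gradient g x⟫_ℝ ∂(volume : Measure E).toSphere := by
  have hgrad : ContDiffOn ℝ 1 (gradient g) {0}ᶜ :=
    contDiffOn_gradient_of_isOpen hgc isOpen_compl_singleton (by norm_num)
  have hgrad_f : ContinuousOn (gradient f) {0}ᶜ :=
    (contDiffOn_gradient_of_isOpen (m := 0) hfc isOpen_compl_singleton le_rfl).continuousOn
  have hhess : ContinuousOn (fderiv ℝ (gradient g)) {0}ᶜ :=
    hgrad.continuousOn_fderiv_of_isOpen isOpen_compl_singleton le_rfl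
  have hcont_f := hfc.continuousOn
  have hcont_g := hgrad.continuousOn
  have heuler (x : sphere (0 : E) 1) : ⟪(x : E), gradient g x⟫_ℝ = g x := by
    have hx := isOpen_compl_singleton.mem_nhds (ne_zero_of_mem_unit_sphere x)
    simpa using hg.inner_gradient_self ((hgc.contDiffAt hx).differentiableAt two_ne_zero)
  let b := stdOrthonormalBasis ℝ E
  have hsum := Finset.sum_congr rfl fun i (_ : i ∈ Finset.univ) =>
    integral_mul_inner_fderiv_gradient_toSphere hn hf hfc hg hgc (b i)
  rw [Finset.sum_sub_distrib, ← Finset.mul_sum,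
    ← integral_finsetSum _ fun i _ => integrable_toSphere_of_continuousOn volume
      (f := fun x => f x * ⟪b i, fderiv ℝ (gradient g) x (b i)⟫_ℝ) (by fun_prop),
    ← integral_finsetSum _ fun i _ => integrable_toSphere_of_continuousOn volume
      (f := fun x => f x * (⟪x, b i⟫_ℝ * ⟪b i, gradient g x⟫_ℝ)) (by fun_prop),
    ← integral_finsetSum _ fun i _ => integrable_toSphere_of_continuousOn volume
      (f := fun x => ⟪gradient f x, b i⟫_ℝ * ⟪b i, gradient g x⟫_ℝ) (by fun_prop)] at hsum
  simpa only [← Finset.mul_sum, b.sum_inner_mul_inner, LinearMap.trace_eq_sum_inner _ b,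
    ContinuousLinearMap.coe_coe, heuler] using hsum

lemma integral_inner_toSphere (e : E) :
    ∫ x : sphere (0 : E) 1, ⟪(x : E), e⟫_ℝ ∂(volume : Measure E).toSphere = 0 := by
  cases subsingleton_or_nontrivial E
  · simp [Subsingleton.elim e 0]
  have hodd : ∫ z : E, ⟪z, e⟫_ℝ * exp (-(‖z‖ ^ 2 / 2)) = 0 := by
    have h := integral_neg_eq_self (fun z : E => ⟪z, e⟫_ℝ * exp (-(‖z‖ ^ 2 / 2))) volume
    simp only [inner_neg_left, norm_neg, neg_mul, integral_neg] at h
    linarith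
  rw [(posHomogeneous_inner e).integral_mul_exp_neg_norm_sq _
    (Nat.succ_pred_eq_of_pos finrank_pos).symm (by fun_prop)] at hodd
  exact (mul_eq_zero.1 hodd).resolve_left (halfGaussianMoment_pos _).ne'

lemma integral_inner_mul_inner_toSphere (hn : finrank ℝ E = n + 1) (u e : E) :
    (n + 1) * ∫ x : sphere (0 : E) 1, ⟪(x : E), u⟫_ℝ * ⟪(x : E), e⟫_ℝ
      ∂(volume : Measure E).toSphere = (volume : Measure E).toSphere.real Set.univ * ⟪u, e⟫_ℝ := by
  have h := integral_fderiv_toSphere (k := 0) hn (posHomogeneous_inner u)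
    (contDiff_id.inner ℝ contDiff_const).contDiffOn e
  have hderiv (x : E) : fderiv ℝ (fun z : E => ⟪z, u⟫_ℝ) x e = ⟪u, e⟫_ℝ := by
    simp only [real_inner_comm u]
    exact congrArg (· e) (innerSL ℝ u).fderiv
  simp only [hderiv, integral_const, smul_eq_mul] at h
  simpa using h.symm

-- On a `1`-homogeneous function the Gaussian Poincaré inequality compares the radial moments of
-- order `n + 2` and `n`, whose ratio is `n + 1`.
lemma integral_sq_toSphere_le (hn : finrank ℝ E = n + 1) {F : E → ℝ}
    (hF : PosHomogeneous 1 F) (hFc : ContDiffOn ℝ 1 F {0}ᶜ)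
    (hmean : ∫ x : sphere (0 : E) 1, F x ∂(volume : Measure E).toSphere = 0) :
    (n + 1) * ∫ x : sphere (0 : E) 1, F x ^ 2 ∂(volume : Measure E).toSphere ≤
      ∫ x : sphere (0 : E) 1, ‖gradient F x‖ ^ 2 ∂(volume : Measure E).toSphere := by
  obtain ⟨L, hFL⟩ := hF.exists_lipschitzWith hFc
  have hcont := hFL.continuous
  have hgrad : ContinuousOn (gradient F) {0}ᶜ :=
    (contDiffOn_gradient_of_isOpen (m := 0) hFc isOpen_compl_singleton le_rfl).continuousOn
  have hmean_gaussian : ∫ z, F z * exp (-(‖z‖ ^ 2 / 2)) = 0 := by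
    rw [hF.integral_mul_exp_neg_norm_sq _ hn hcont.continuousOn, hmean, mul_zero]
  have hpoincare := integral_sq_mul_exp_le_of_variance_tilted_le
    (by simpa [div_eq_inv_mul] using
      integrable_norm_pow_mul_exp_neg (volume : Measure E) 0 one_half_pos)
    hcont.aemeasurable hmean_gaussian (variance_gaussian_le_integral_norm_gradient_sq hFL)
  rw [(hF.pow 2).integral_mul_exp_neg_norm_sq _ hn (hcont.pow 2).continuousOn,
    ((hF.gradient (k := 0)).norm.pow 2).integral_mul_exp_neg_norm_sq _ hn (hgrad.norm.pow 2),
    one_mul, zero_mul, add_zero, halfGaussianMoment_add_two, mul_comm (_ + 1), mul_assoc]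
    at hpoincare
  exact le_of_mul_le_mul_left hpoincare (halfGaussianMoment_pos n)

theorem integral_sub_average_sq_toSphere_le (hn : finrank ℝ E = n + 1) {f : E → ℝ}
    (hf : PosHomogeneous 1 f) (hfc : ContDiffOn ℝ 1 f {0}ᶜ) :
    n * ∫ x : sphere (0 : E) 1,
        (f x - ⨍ y : sphere (0 : E) 1, f y ∂(volume : Measure E).toSphere) ^ 2
        ∂(volume : Measure E).toSphere ≤
      ∫ x : sphere (0 : E) 1, ‖gradient f x‖ ^ 2 ∂(volume : Measure E).toSphere -
        ∫ x : sphere (0 : E) 1, f x ^ 2 ∂(volume : Measure E).toSphere := by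
  have := nontrivial_of_finrank_eq_succ hn
  set T := ⨍ y : sphere (0 : E) 1, f y ∂(volume : Measure E).toSphere
  have hcont := hfc.continuousOn
  have hgrad : ContinuousOn (gradient f) {0}ᶜ :=
    (contDiffOn_gradient_of_isOpen (m := 0) hfc isOpen_compl_singleton le_rfl).continuousOn
  have hdiff (x : sphere (0 : E) 1) : DifferentiableAt ℝ f x :=
    (hfc.contDiffAt (isOpen_compl_singleton.mem_nhds
      (ne_zero_of_mem_unit_sphere x))).differentiableAt one_ne_zero
  have hmean :
      ∫ x : sphere (0 : E) 1, (f x - T * ‖(x : E)‖) ∂(volume : Measure E).toSphere = 0 := by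
    simp only [norm_eq_of_mem_sphere, mul_one]
    exact integral_sub_average _ _
  have hpoincare := integral_sq_toSphere_le hn
    (hf.sub (posHomogeneous_norm.clm_apply (ContinuousLinearMap.mul ℝ ℝ T)))
    (hfc.sub (contDiffOn_const.mul fun z hz => (contDiffAt_norm ℝ hz).contDiffWithinAt)) hmean
  simp only [ContinuousLinearMap.mul_apply', hf.norm_gradient_sub_mul_norm_sq (hdiff _),
    norm_eq_of_mem_sphere, mul_one] at hpoincare
  rw [integral_add
      (integrable_toSphere_of_continuousOn volume (f := fun x => (f x - T) ^ 2) (by fun_prop))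
      (integrable_toSphere_of_continuousOn volume (f := fun x => ‖gradient f x‖ ^ 2 - f x ^ 2)
        (by fun_prop)),
    integral_sub
      (integrable_toSphere_of_continuousOn volume (f := fun x => ‖gradient f x‖ ^ 2) (by fun_prop))
      (integrable_toSphere_of_continuousOn volume (f := fun x => f x ^ 2) (by fun_prop))]
    at hpoincare
  linarith

end SphereCalculus

section LipschitzOnSphere

variable {E : Type*} [NormedAddCommGroup E] [NormedSpace ℝ E]

lemma abs_sub_one_lt_and_dist_lt_of_smul_mem_ball {x x₀ : sphere (0 : E) 1}
    {r ρ : ℝ} (hr : 0 < r) (hmem : r • (x : E) ∈ ball (x₀ : E) ρ) :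
    |r - 1| < ρ ∧ dist x x₀ < 2 * ρ := by
  rw [mem_ball, dist_eq_norm] at hmem
  have hradius : |r - 1| < ρ := by
    refine lt_of_le_of_lt ?_ hmem
    simpa [norm_smul, abs_of_pos hr] using abs_norm_sub_norm_le (r • (x : E)) x₀
  refine ⟨hradius, ?_⟩
  calc dist x x₀ = ‖(r • (x : E) - x₀) - (r - 1) • (x : E)‖ := by
        rw [Subtype.dist_eq, dist_eq_norm, sub_smul, one_smul]
        congr 1
        abel
    _ ≤ ‖r • (x : E) - x₀‖ + |r - 1| := by
        simpa [norm_smul] using norm_sub_le (r • (x : E) - x₀) ((r - 1) • (x : E))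
    _ < 2 * ρ := by linarith

lemma integral_pow_smul_indicator_ball_le (n : ℕ) (x x₀ : sphere (0 : E) 1) {ρ : ℝ} (hρ : 0 < ρ)
    (hρ₁ : ρ ≤ 1) :
    ∫ r in Set.Ioi (0 : ℝ), r ^ n • (ball (x₀ : E) ρ).indicator (1 : E → ℝ) (r • (x : E)) ≤
      (ball x₀ (2 * ρ)).indicator (fun _ => 2 ^ n * (2 * ρ)) x := by
  set radial : ℝ → ℝ := (Set.Icc (1 - ρ) (1 + ρ)).indicator fun _ => 2 ^ n
  have hradial : Integrable radial :=
    (integrable_indicator_iff measurableSet_Icc).2 (integrableOn_const (by simp))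
  have hradial_nonneg : 0 ≤ radial := Set.indicator_nonneg fun _ _ => by positivity
  by_cases hx : x ∈ ball x₀ (2 * ρ)
  · rw [Set.indicator_of_mem hx]
    calc _ ≤ ∫ r in Set.Ioi (0 : ℝ), radial r := by
          refine setIntegral_mono_of_nonneg (fun r hr => ?_) (fun r hr => ?_) hradial.integrableOn
          · exact mul_nonneg (pow_nonneg (Set.mem_Ioi.1 hr).le n)
              (Set.indicator_nonneg (fun _ _ => zero_le_one) _)
          · by_cases hmem : r • (x : E) ∈ ball (x₀ : E) ρ
            · have hclose := abs_lt.1 (abs_sub_one_lt_and_dist_lt_of_smul_mem_ball hr hmem).1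
              have hr' : r ∈ Set.Icc (1 - ρ) (1 + ρ) := ⟨by linarith, by linarith⟩
              rw [Set.indicator_of_mem hmem, Pi.one_apply, smul_eq_mul, mul_one,
                show radial r = 2 ^ n from Set.indicator_of_mem hr' _]
              exact pow_le_pow_left₀ (Set.mem_Ioi.1 hr).le (by linarith) n
            · rw [Set.indicator_of_notMem hmem, smul_zero]
              exact hradial_nonneg r
      _ ≤ ∫ r, radial r := setIntegral_le_integral hradial (.of_forall hradial_nonneg)
      _ = 2 ^ n * (2 * ρ) := by
          rw [integral_indicator measurableSet_Icc, setIntegral_const,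
            volume_real_Icc_of_le (by linarith), smul_eq_mul]
          ring
  · rw [Set.indicator_of_notMem hx]
    refine (setIntegral_eq_zero_of_forall_eq_zero fun r hr => ?_).le
    rw [Set.indicator_of_notMem, smul_zero]
    exact fun hmem => hx (abs_sub_one_lt_and_dist_lt_of_smul_mem_ball hr hmem).2

variable [FiniteDimensional ℝ E] [MeasurableSpace E] [BorelSpace E] {n : ℕ} (μ : Measure E)
  [μ.IsAddHaarMeasure]

lemma pow_mul_measure_ball_le_toSphere_ball (hn : finrank ℝ E = n + 1) (x₀ : sphere (0 : E) 1)
    {ρ : ℝ} (hρ : 0 < ρ) (hρ₁ : ρ ≤ 1) : ρ ^ n * μ.real (ball (0 : E) 1) ≤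
      2 ^ (n + 1) * μ.toSphere.real (ball x₀ (2 * ρ)) := by
  have : Nontrivial E := nontrivial_of_finrank_eq_succ hn
  have hball : μ.real (ball (x₀ : E) ρ) = ρ ^ (n + 1) * μ.real (ball (0 : E) 1) := by
    rw [Measure.real, Measure.addHaar_ball_of_pos _ _ hρ, ENNReal.toReal_mul, hn,
      ENNReal.toReal_ofReal (by positivity), Measure.real]
  have hpolar : μ.real (ball (x₀ : E) ρ) ≤
      μ.toSphere.real (ball x₀ (2 * ρ)) * (2 ^ n * (2 * ρ)) := by
    rw [← integral_indicator_one measurableSet_ball, integral_eq_integral_toSphere_integral_Ioi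
      μ ((integrable_indicator_iff measurableSet_ball).2
        (integrableOn_const measure_ball_lt_top.ne)), hn, Nat.add_sub_cancel]
    calc _ ≤ ∫ x, (ball x₀ (2 * ρ)).indicator (fun _ => 2 ^ n * (2 * ρ)) x
          ∂μ.toSphere := by
          refine integral_mono_of_nonneg (.of_forall fun x => ?_)
            ((integrable_const _).indicator measurableSet_ball)
            (.of_forall fun x => integral_pow_smul_indicator_ball_le n x x₀ hρ hρ₁)
          exact setIntegral_nonneg measurableSet_Ioi fun r hr => mul_nonneg
            (pow_nonneg (Set.mem_Ioi.1 hr).le n) (Set.indicator_nonneg (fun _ _ => zero_le_one) _)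
      _ = _ := by rw [integral_indicator_const _ measurableSet_ball, smul_eq_mul]
  refine le_of_mul_le_mul_left ?_ hρ
  calc _ = μ.real (ball (x₀ : E) ρ) := by rw [hball]; ring
    _ ≤ _ := hpolar
    _ = _ := by ring

-- Near a point where it is large, a Lipschitz function stays large on a whole cap.
lemma measure_ball_mul_abs_pow_le_integral_sq (hn : finrank ℝ E = n + 1)
    {f : sphere (0 : E) 1 → ℝ} {L : NNReal} (hf : LipschitzWith L f) {x₀ : sphere (0 : E) 1}
    (hfL : |f x₀| ≤ 4 * L) : μ.real (ball (0 : E) 1) * |f x₀| ^ (n + 2) ≤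
      2 ^ (n + 3) * (4 * L) ^ n * ∫ x, f x ^ 2 ∂μ.toSphere := by
  set M := |f x₀|
  rcases (abs_nonneg (f x₀)).eq_or_lt with hM | hM
  · rw [show M = 0 from hM.symm, zero_pow (by lia), mul_zero]
    exact mul_nonneg (by positivity) (integral_nonneg fun _ => sq_nonneg _)
  have hL : (0 : ℝ) < 4 * L := hM.trans_le hfL
  have hlarge : ∀ x ∈ ball x₀ (2 * (M / (4 * L))), M ^ 2 / 4 ≤ f x ^ 2 := by
    intro x hx
    have hclose : |f x - f x₀| ≤ M / 2 := by
      calc |f x - f x₀| ≤ L * dist x x₀ := hf.dist_le_mul x x₀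
        _ ≤ L * (2 * (M / (4 * L))) := by gcongr; exact (mem_ball.1 hx).le
        _ = M / 2 := by
            have : (L : ℝ) ≠ 0 := right_ne_zero_of_mul hL.ne'
            field_simp
            ring
    have hhalf : M / 2 ≤ |f x| := by
      linarith [abs_sub_abs_le_abs_sub (f x₀) (f x), abs_sub_comm (f x) (f x₀)]
    rw [← sq_abs (f x)]
    nlinarith
  have hint : Integrable (fun x => f x ^ 2) μ.toSphere :=
    (hf.continuous.pow 2).integrable_of_hasCompactSupport (.of_compactSpace _)
  have hmarkov : M ^ 2 / 4 * μ.toSphere.real (ball x₀ (2 * (M / (4 * L)))) ≤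
      ∫ x, f x ^ 2 ∂μ.toSphere :=
    (setIntegral_ge_of_const_le_real measurableSet_ball (measure_ne_top _ _) hlarge
      hint.integrableOn).trans (setIntegral_le_integral hint (.of_forall fun _ => sq_nonneg _))
  have hcap := pow_mul_measure_ball_le_toSphere_ball μ hn x₀ (div_pos hM hL) ((div_le_one hL).2 hfL)
  rw [div_pow, div_mul_eq_mul_div, div_le_iff₀ (by positivity)] at hcap
  calc μ.real (ball (0 : E) 1) * M ^ (n + 2)
      = M ^ 2 * (M ^ n * μ.real (ball (0 : E) 1)) := by ring
    _ ≤ M ^ 2 * (2 ^ (n + 1) * μ.toSphere.real (ball x₀ (2 * (M / (4 * L)))) *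
        (4 * L) ^ n) := by gcongr
    _ = 2 ^ (n + 3) * (4 * L) ^ n * (M ^ 2 / 4 *
        μ.toSphere.real (ball x₀ (2 * (M / (4 * L))))) := by ring
    _ ≤ _ := by gcongr

end LipschitzOnSphere

section SupportFunction

variable {n : ℕ} {K : Set (Eu n)}

lemma inner_le_sfn (hK : IsCompact K) (z : Eu n) {y : Eu n} (hy : y ∈ K) : ⟪z, y⟫_ℝ ≤ sfn K z :=
  le_csSup (hK.bddAbove_image (by fun_prop)) (Set.mem_image_of_mem _ hy)

lemma exists_inner_eq_sfn (hK : IsCompact K) (hne : K.Nonempty) (z : Eu n) :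
    ∃ y ∈ K, ⟪z, y⟫_ℝ = sfn K z := by
  obtain ⟨y, hy, h⟩ := hK.exists_sSup_image_eq hne (f := fun y => ⟪z, y⟫_ℝ) (by fun_prop)
  exact ⟨y, hy, h.symm⟩

lemma sfn_empty (z : Eu n) : sfn ∅ z = 0 := by simp [sfn]

lemma posHomogeneous_sfn (K : Set (Eu n)) : PosHomogeneous 1 (sfn K) := by
  intro ρ hρ x
  simp only [sfn, real_inner_smul_left, pow_one]
  rw [← Real.sSup_smul_of_nonneg hρ.le, ← Set.image_smul, Set.image_image]
  simp only [smul_eq_mul]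

lemma sfn_zero (K : Set (Eu n)) : sfn K 0 = 0 := (posHomogeneous_sfn K).map_zero

lemma convexOn_sfn (hK : IsCompact K) (hne : K.Nonempty) : ConvexOn ℝ Set.univ (sfn K) := by
  refine ⟨convex_univ, fun z _ w _ a b ha hb _ => ?_⟩
  obtain ⟨y, hy, h⟩ := exists_inner_eq_sfn hK hne (a • z + b • w)
  rw [← h, inner_add_left, real_inner_smul_left, real_inner_smul_left]
  simp only [smul_eq_mul]
  gcongr
  exacts [inner_le_sfn hK z hy, inner_le_sfn hK w hy]

lemma lipschitzWith_sfn_sub_inner (hK : IsCompact K) (hne : K.Nonempty) {c : Eu n} {R : NNReal}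
    (hR : ∀ y ∈ K, ‖y - c‖ ≤ R) : LipschitzWith R fun z => sfn K z - ⟪z, c⟫_ℝ := by
  refine LipschitzWith.of_le_add_mul _ fun z w => ?_
  obtain ⟨y, hy, h⟩ := exists_inner_eq_sfn hK hne z
  calc sfn K z - ⟪z, c⟫_ℝ = ⟪w, y⟫_ℝ - ⟪w, c⟫_ℝ + ⟪z - w, y - c⟫_ℝ := by
        rw [← h]; simp only [inner_sub_left, inner_sub_right]; ring
    _ ≤ sfn K w - ⟪w, c⟫_ℝ + ‖z - w‖ * ‖y - c‖ := by
        gcongr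
        exacts [inner_le_sfn hK w hy, real_inner_le_norm _ _]
    _ ≤ sfn K w - ⟪w, c⟫_ℝ + R * dist z w := by
        rw [dist_eq_norm, mul_comm]
        gcongr
        exact hR y hy

lemma exists_lipschitzWith_sfn (hK : IsCompact K) (hne : K.Nonempty) :
    ∃ R : NNReal, LipschitzWith R (sfn K) ∧ ∀ y ∈ K, ‖y‖ ≤ R := by
  obtain ⟨R, hR0, hR⟩ := hK.isBounded.exists_pos_norm_le
  lift R to NNReal using hR0.le
  refine ⟨R, ?_, hR⟩
  simpa using lipschitzWith_sfn_sub_inner hK hne (c := 0) (by simpa using hR)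

end SupportFunction

section ConvexBodyWithC2SupportFunction

/-- A compact convex set whose support function is positive on the sphere and `C²` away from the
origin: the class of bodies to which the stability argument applies. Positivity of the support
function amounts to `0 ∈ interior K`. -/
structure IsC2ConvexBody {n : ℕ} (K : Set (Eu n)) : Prop where
  isCompact : IsCompact K
  convex : Convex ℝ K
  sfn_coe_pos : ∀ x : Sph n, 0 < sfn K x
  contDiffOn_sfn : ContDiffOn ℝ 2 (sfn K) {0}ᶜ

variable {n : ℕ} {K : Set (Eu n)}

lemma IsSmoothConvexBody.isC2ConvexBody (hK : IsSmoothConvexBody K) : IsC2ConvexBody K where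
  isCompact := hK.compact
  convex := hK.convex
  sfn_coe_pos := hK.pos
  contDiffOn_sfn := hK.smooth.of_le (WithTop.coe_le_coe.2 le_top)

namespace IsC2ConvexBody

lemma nonempty (hK : IsC2ConvexBody K) : K.Nonempty := by
  obtain ⟨x, hx⟩ : (sphere (0 : Eu n) 1).Nonempty := NormedSpace.sphere_nonempty.2 zero_le_one
  by_contra hempty
  simpa [Set.not_nonempty_iff_eq_empty.1 hempty, sfn_empty] using hK.sfn_coe_pos ⟨x, hx⟩

lemma sfn_pos (hK : IsC2ConvexBody K) {z : Eu n} (hz : z ≠ 0) : 0 < sfn K z := by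
  rw [(posHomogeneous_sfn K).apply_eq_norm_pow_smul hz]
  have := hK.sfn_coe_pos ⟨‖z‖⁻¹ • z, by simp [norm_smul, hz]⟩
  have := norm_pos_iff.2 hz
  positivity

lemma continuous_sfn (hK : IsC2ConvexBody K) : Continuous (sfn K) :=
  (exists_lipschitzWith_sfn hK.isCompact hK.nonempty).choose_spec.1.continuous

lemma exists_mul_norm_le_sfn (hK : IsC2ConvexBody K) : ∃ δ > 0, ∀ z, δ * ‖z‖ ≤ sfn K z := by
  obtain ⟨δ, hδ, h⟩ := (posHomogeneous_sfn K).exists_mul_norm_pow_le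
    hK.continuous_sfn.continuousOn fun z => hK.sfn_pos
  refine ⟨δ, hδ, fun z => ?_⟩
  rcases eq_or_ne z 0 with rfl | hz
  · simp [sfn_zero]
  · simpa using h z hz

lemma contDiffAt_sfn (hK : IsC2ConvexBody K) {z : Eu n} (hz : z ≠ 0) : ContDiffAt ℝ 2 (sfn K) z :=
  hK.contDiffOn_sfn.contDiffAt (isOpen_compl_singleton.mem_nhds hz)

lemma hasGradientAt_sfn (hK : IsC2ConvexBody K) {z : Eu n} (hz : z ≠ 0) :
    HasGradientAt (sfn K) (gradient (sfn K) z) z :=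
  ((hK.contDiffAt_sfn hz).differentiableAt two_ne_zero).hasGradientAt

lemma contDiffOn_gradient_sfn (hK : IsC2ConvexBody K) :
    ContDiffOn ℝ 1 (gradient (sfn K)) {0}ᶜ :=
  contDiffOn_gradient_of_isOpen hK.contDiffOn_sfn isOpen_compl_singleton (by norm_num)

lemma hasFDerivAt_gradient_sfn (hK : IsC2ConvexBody K) {z : Eu n} (hz : z ≠ 0) :
    HasFDerivAt (gradient (sfn K)) (hessA K z) z :=
  ((hK.contDiffOn_gradient_sfn.contDiffAt
    (isOpen_compl_singleton.mem_nhds hz)).differentiableAt one_ne_zero).hasFDerivAt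

lemma inner_gradient_sfn (hK : IsC2ConvexBody K) {z : Eu n} (hz : z ≠ 0) :
    ⟪z, gradient (sfn K) z⟫_ℝ = sfn K z := by
  simpa using (posHomogeneous_sfn K).inner_gradient_self (hK.hasGradientAt_sfn hz).differentiableAt

lemma gradient_sfn_eq (hK : IsC2ConvexBody K) {z y : Eu n} (hz : z ≠ 0) (hy : y ∈ K)
    (hzy : ⟪z, y⟫_ℝ = sfn K z) : gradient (sfn K) z = y := by
  have hmin : IsLocalMin (fun w => sfn K w - ⟪y, w⟫_ℝ) z := .of_forall fun w => by
    have := inner_le_sfn hK.isCompact w hy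
    simp only [real_inner_comm _ y, hzy, sub_self, sub_nonneg, this]
  have hzero := hmin.hasFDerivAt_eq_zero
    ((hK.hasGradientAt_sfn hz).hasFDerivAt.sub (innerSL ℝ y).hasFDerivAt)
  refine ext_inner_right ℝ fun v => sub_eq_zero.1 ?_
  simpa using DFunLike.congr_fun hzero v

lemma gradient_sfn_mem (hK : IsC2ConvexBody K) {z : Eu n} (hz : z ≠ 0) :
    gradient (sfn K) z ∈ K := by
  obtain ⟨y, hy, h⟩ := exists_inner_eq_sfn hK.isCompact hK.nonempty z
  rwa [hK.gradient_sfn_eq hz hy h]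

lemma hessA_apply_self (hK : IsC2ConvexBody K) {z : Eu n} (hz : z ≠ 0) : hessA K z z = 0 := by
  simpa using (posHomogeneous_sfn K).gradient.hasFDerivAt_apply_self
    (hK.hasFDerivAt_gradient_sfn hz)

lemma inner_hessA_comm (hK : IsC2ConvexBody K) {z : Eu n} (hz : z ≠ 0) (v w : Eu n) :
    ⟪hessA K z v, w⟫_ℝ = ⟪hessA K z w, v⟫_ℝ := by
  have hderiv : HasFDerivAt (fderiv ℝ (sfn K)) (fderiv ℝ (fderiv ℝ (sfn K)) z) z :=
    (((hK.contDiffAt_sfn hz).fderiv_right (m := 1) (by norm_num)).differentiableAt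
      one_ne_zero).hasFDerivAt
  have hhess : ∀ v w, ⟪hessA K z v, w⟫_ℝ = fderiv ℝ (fderiv ℝ (sfn K)) z v w := fun v w => by
    rw [(hK.hasFDerivAt_gradient_sfn hz).unique
      ((InnerProductSpace.toDual ℝ (Eu n)).symm.toContinuousLinearEquiv.hasFDerivAt.comp z hderiv)]
    simp
  rw [hhess, hhess]
  exact (hK.contDiffAt_sfn hz).isSymmSndFDerivAt (by simp) v w

end IsC2ConvexBody

end ConvexBodyWithC2SupportFunction

section DeterminantOfRankOnePerturbation

variable {E : Type*} [NormedAddCommGroup E] [InnerProductSpace ℝ E] [FiniteDimensional ℝ E]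

lemma det_smul_add_smulRight {A : E →L[ℝ] E} {x X : E} (hx : ‖x‖ = 1) (hxX : ⟪x, X⟫_ℝ ≠ 0)
    (hA : ∀ v, ⟪x, A v⟫_ℝ = 0) (hAx : A x = 0) :
    (⟪x, X⟫_ℝ • A + (innerSL ℝ X).smulRight X).det =
      ⟪x, X⟫_ℝ ^ (finrank ℝ E + 1) * (A + (innerSL ℝ x).smulRight x).det := by
  have hxx : ⟪x, x⟫_ℝ = 1 := by rw [real_inner_self_eq_norm_sq, hx, one_pow]
  set h := ⟪x, X⟫_ℝ with hh
  have hfactor : ((h • A + (innerSL ℝ X).smulRight X : E →L[ℝ] E) : E →ₗ[ℝ] E) =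
      LinearMap.transvection (innerSL ℝ x : E →ₗ[ℝ] ℝ) (h⁻¹ • X - x) ∘ₗ
        (A + (innerSL ℝ x).smulRight x : E →L[ℝ] E) ∘ₗ
          (h • LinearMap.transvection (innerSL ℝ (X - x) : E →ₗ[ℝ] ℝ) x) := by
    ext1 v
    have hinner : (A + (innerSL ℝ x).smulRight x) (h • (v + ⟪X - x, v⟫_ℝ • x)) =
        h • A v + (h * ⟪X, v⟫_ℝ) • x := by
      simp only [map_smul, map_add, add_apply, hAx, zero_add, ContinuousLinearMap.smulRight_apply,
        innerSL_apply_apply, hxx, inner_sub_left, one_smul]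
      module
    simp only [LinearMap.comp_apply, LinearMap.smul_apply, LinearMap.transvection.apply,
      ContinuousLinearMap.coe_coe, innerSL_apply_apply, hinner, add_apply, smul_apply,
      ContinuousLinearMap.smulRight_apply, inner_add_right, inner_smul_right, hA, hxx, mul_zero,
      zero_add, mul_one, smul_sub, smul_smul]
    rw [mul_right_comm, mul_inv_cancel₀ hxX, one_mul]
    abel
  rw [ContinuousLinearMap.det, hfactor, LinearMap.det_comp, LinearMap.det_comp, LinearMap.det_smul,
    LinearMap.transvection.det, LinearMap.transvection.det]
  simp only [ContinuousLinearMap.coe_coe, innerSL_apply_apply, inner_sub_left, inner_sub_right,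
    inner_smul_right, hxx, real_inner_comm x X, ← hh, inv_mul_cancel₀ hxX]
  rw [ContinuousLinearMap.det]
  ring

end DeterminantOfRankOnePerturbation

section DualityMap

variable {n : ℕ} {K : Set (Eu n)}

/-- The map `h • ∇h`, the gradient of `h ^ 2 / 2` where `h` is the support function of `K`. Its
inverse is the gradient of `g ^ 2 / 2`, where `g` is the gauge of `K`. -/
def dualityMap (K : Set (Eu n)) (z : Eu n) : Eu n := sfn K z • gradient (sfn K) z

lemma posHomogeneous_dualityMap (K : Set (Eu n)) : PosHomogeneous 1 (dualityMap K) :=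
  (posHomogeneous_sfn K).smul (posHomogeneous_sfn K).gradient

lemma dualityMap_zero (K : Set (Eu n)) : dualityMap K 0 = 0 :=
  (posHomogeneous_dualityMap K).map_zero

namespace IsC2ConvexBody

lemma contDiffOn_dualityMap (hK : IsC2ConvexBody K) : ContDiffOn ℝ 1 (dualityMap K) {0}ᶜ :=
  (hK.contDiffOn_sfn.of_le one_le_two).smul hK.contDiffOn_gradient_sfn

lemma differentiableAt_dualityMap (hK : IsC2ConvexBody K) {z : Eu n} (hz : z ≠ 0) :
    DifferentiableAt ℝ (dualityMap K) z :=
  (hK.contDiffOn_dualityMap.contDiffAt (isOpen_compl_singleton.mem_nhds hz)).differentiableAt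
    one_ne_zero

lemma exists_lipschitzWith_dualityMap (hK : IsC2ConvexBody K) :
    ∃ L, LipschitzWith L (dualityMap K) :=
  (posHomogeneous_dualityMap K).exists_lipschitzWith hK.contDiffOn_dualityMap

lemma continuous_dualityMap (hK : IsC2ConvexBody K) : Continuous (dualityMap K) :=
  hK.exists_lipschitzWith_dualityMap.choose_spec.continuous

lemma fderiv_dualityMap (hK : IsC2ConvexBody K) {z : Eu n} (hz : z ≠ 0) :
    fderiv ℝ (dualityMap K) z = sfn K z • hessA K z +
      (innerSL ℝ (gradient (sfn K) z)).smulRight (gradient (sfn K) z) := by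
  refine HasFDerivAt.fderiv (((hK.hasGradientAt_sfn hz).hasFDerivAt.fun_smul
    (hK.hasFDerivAt_gradient_sfn hz)).congr_fderiv ?_)
  ext1 v
  simp

lemma det_fderiv_dualityMap (hK : IsC2ConvexBody K) (x : Sph n) :
    (fderiv ℝ (dualityMap K) x).det = sfn K x ^ (n + 2) * rK K x := by
  have hx := ne_zero_of_mem_unit_sphere x
  have h := hK.inner_gradient_sfn hx
  have hdet := det_smul_add_smulRight (A := hessA K x) (X := gradient (sfn K) x)
    (norm_eq_of_mem_sphere x) (by rw [h]; exact (hK.sfn_coe_pos x).ne')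
    (fun v => by rw [real_inner_comm, hK.inner_hessA_comm hx, hK.hessA_apply_self hx,
      inner_zero_left]) (hK.hessA_apply_self hx)
  rwa [h, finrank_euclideanSpace_fin, ← hK.fderiv_dualityMap hx] at hdet

lemma hasGradientAt_sfn_sq_div_two (hK : IsC2ConvexBody K) (z : Eu n) :
    HasGradientAt (fun w => sfn K w ^ 2 / 2) (dualityMap K z) z := by
  rw [hasGradientAt_iff_hasFDerivAt]
  rcases eq_or_ne z 0 with rfl | hz
  · have h := ((posHomogeneous_sfn K).pow 2).hasFDerivAt_zero_of_two_le
      (hK.continuous_sfn.pow 2).continuousOn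
    simpa [dualityMap_zero, div_eq_inv_mul] using h.const_mul (2⁻¹ : ℝ)
  · have h := ((hK.hasGradientAt_sfn hz).hasFDerivAt.pow 2).const_mul (2⁻¹ : ℝ)
    simp only [← div_eq_inv_mul] at h
    refine h.congr_fderiv ?_
    rw [dualityMap, map_smul, smul_smul]
    congr 1
    simp

lemma inner_dualityMap_self (hK : IsC2ConvexBody K) (z : Eu n) :
    ⟪dualityMap K z, z⟫_ℝ = sfn K z ^ 2 := by
  rcases eq_or_ne z 0 with rfl | hz
  · simp [sfn_zero]
  · rw [dualityMap, real_inner_smul_left, real_inner_comm, hK.inner_gradient_sfn hz, sq]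

end IsC2ConvexBody

end DualityMap

section Gauge

variable {n : ℕ} {K : Set (Eu n)}

namespace IsC2ConvexBody

lemma mem_nhds_zero (hK : IsC2ConvexBody K) : K ∈ 𝓝 0 := by
  obtain ⟨δ, hδ, hsfn⟩ := hK.exists_mul_norm_le_sfn
  refine mem_of_superset (ball_mem_nhds 0 hδ) fun y hy => by_contra fun hyK => ?_
  obtain ⟨f, u, hfu, hu⟩ := geometric_hahn_banach_closed_point hK.convex hK.isCompact.isClosed hyK
  set z := (InnerProductSpace.toDual ℝ (Eu n)).symm f
  obtain ⟨k, hk, hkz⟩ := exists_inner_eq_sfn hK.isCompact hK.nonempty z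
  have hlt : ‖z‖ * δ < ‖z‖ * ‖y‖ := calc
    ‖z‖ * δ ≤ sfn K z := mul_comm δ ‖z‖ ▸ hsfn z
    _ = f k := by rw [← hkz, InnerProductSpace.toDual_symm_apply]
    _ < f y := (hfu k hk).trans hu
    _ = ⟪z, y⟫_ℝ := InnerProductSpace.toDual_symm_apply.symm
    _ ≤ ‖z‖ * ‖y‖ := real_inner_le_norm z y
  exact (lt_of_mul_lt_mul_left hlt (norm_nonneg z)).not_gt (mem_ball_zero_iff.1 hy)

lemma continuous_gauge (hK : IsC2ConvexBody K) : Continuous (gauge K) :=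
  _root_.continuous_gauge hK.convex hK.mem_nhds_zero

lemma gauge_pos (hK : IsC2ConvexBody K) {y : Eu n} (hy : y ≠ 0) : 0 < gauge K y :=
  (_root_.gauge_pos (absorbent_nhds_zero hK.mem_nhds_zero)
    (NormedSpace.isVonNBounded_of_isBounded ℝ hK.isCompact.isBounded)).2 hy

lemma gauge_inv_smul_mem (hK : IsC2ConvexBody K) {y : Eu n} (hy : y ≠ 0) :
    (gauge K y)⁻¹ • y ∈ K := by
  have hpos := hK.gauge_pos hy
  have hle : gauge K ((gauge K y)⁻¹ • y) ≤ 1 := by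
    rw [gauge_smul_of_nonneg (inv_nonneg.2 hpos.le), smul_eq_mul, inv_mul_cancel₀ hpos.ne']
  rwa [gauge_le_one_iff_mem_closure hK.convex hK.mem_nhds_zero,
    hK.isCompact.isClosed.closure_eq] at hle

lemma exists_norm_le_mul_gauge (hK : IsC2ConvexBody K) : ∃ R > 0, ∀ y, ‖y‖ ≤ R * gauge K y := by
  obtain ⟨R, hR0, hR⟩ := hK.isCompact.isBounded.exists_pos_norm_le
  refine ⟨R, hR0, fun y => ?_⟩
  rcases eq_or_ne y 0 with rfl | hy
  · simp
  have hpos := hK.gauge_pos hy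
  have hmem := hR _ (hK.gauge_inv_smul_mem hy)
  rwa [norm_smul, norm_inv, norm_of_nonneg hpos.le, inv_mul_le_iff₀ hpos, mul_comm] at hmem

lemma exists_gauge_le_mul_norm (hK : IsC2ConvexBody K) : ∃ C, ∀ y, gauge K y ≤ C * ‖y‖ := by
  obtain ⟨δ, hδ, hsub⟩ := Metric.mem_nhds_iff.1 hK.mem_nhds_zero
  refine ⟨δ⁻¹, fun y => ?_⟩
  rw [← div_eq_inv_mul, le_div_iff₀' hδ]
  exact mul_gauge_le_norm hsub

lemma inner_le_gauge_mul_sfn (hK : IsC2ConvexBody K) (y z : Eu n) :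
    ⟪y, z⟫_ℝ ≤ gauge K y * sfn K z := by
  rcases eq_or_ne y 0 with rfl | hy
  · simp
  have h := inner_le_sfn hK.isCompact z (hK.gauge_inv_smul_mem hy)
  rwa [inner_smul_right, inv_mul_le_iff₀ (hK.gauge_pos hy), real_inner_comm] at h

lemma gauge_dualityMap (hK : IsC2ConvexBody K) (z : Eu n) : gauge K (dualityMap K z) = sfn K z := by
  rcases eq_or_ne z 0 with rfl | hz
  · simp [dualityMap_zero, sfn_zero]
  have hpos := hK.sfn_pos hz
  refine le_antisymm ?_ (le_of_mul_le_mul_right ?_ hpos)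
  · rw [dualityMap, gauge_smul_of_nonneg hpos.le, smul_eq_mul]
    exact mul_le_of_le_one_right hpos.le (gauge_le_one_of_mem (hK.gradient_sfn_mem hz))
  · rw [← sq, ← hK.inner_dualityMap_self z]
    exact hK.inner_le_gauge_mul_sfn _ z

lemma dualityMap_eq_iff (hK : IsC2ConvexBody K) {y z : Eu n} (hy : y ≠ 0) :
    dualityMap K z = y ↔ sfn K z ≤ gauge K y ∧ gauge K y ^ 2 ≤ ⟪y, z⟫_ℝ := by
  have hpos := hK.gauge_pos hy
  constructor
  · rintro rfl
    simp only [hK.gauge_dualityMap, hK.inner_dualityMap_self, le_refl, and_self]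
  rintro ⟨hle, hsq⟩
  have heq : sfn K z = gauge K y := hle.antisymm <| le_of_mul_le_mul_left
    ((sq (gauge K y) ▸ hsq).trans (hK.inner_le_gauge_mul_sfn y z)) hpos
  have hz : z ≠ 0 := by
    rintro rfl
    exact hpos.ne (heq ▸ sfn_zero K).symm
  have hgrad : gradient (sfn K) z = (gauge K y)⁻¹ • y := by
    refine hK.gradient_sfn_eq hz (hK.gauge_inv_smul_mem hy)
      ((inner_le_sfn hK.isCompact z (hK.gauge_inv_smul_mem hy)).antisymm ?_)
    rwa [heq, inner_smul_right, le_inv_mul_iff₀ hpos, real_inner_comm, ← sq]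
  rw [dualityMap, hgrad, heq, smul_inv_smul₀ hpos.ne']

lemma dualityMap_eq_zero_iff (hK : IsC2ConvexBody K) {z : Eu n} : dualityMap K z = 0 ↔ z = 0 := by
  refine ⟨fun h => by_contra fun hz => (hK.sfn_pos hz).ne ?_, fun h => h ▸ dualityMap_zero K⟩
  rw [← hK.gauge_dualityMap, h, gauge_zero]

lemma dualityMap_surjective (hK : IsC2ConvexBody K) : Function.Surjective (dualityMap K) := by
  intro y
  obtain ⟨δ, hδ, hsfn⟩ := hK.exists_mul_norm_le_sfn
  have hcont : Continuous fun z => sfn K z ^ 2 / 2 - ⟪y, z⟫_ℝ := by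
    have := hK.continuous_sfn
    fun_prop
  obtain ⟨z, hz⟩ := hcont.exists_forall_le' (x₀ := 0) (by
    filter_upwards [tendsto_norm_cocompact_atTop.eventually_ge_atTop (2 * ‖y‖ / δ ^ 2)] with z hz
    rw [div_le_iff₀ (by positivity)] at hz
    have hsq := pow_le_pow_left₀ (by positivity) (hsfn z) 2
    have hinner := real_inner_le_norm y z
    simp only [sfn_zero, inner_zero_right]
    nlinarith [norm_nonneg z])
  have hmin : IsLocalMin (fun w => sfn K w ^ 2 / 2 - ⟪y, w⟫_ℝ) z := .of_forall hz
  have hzero := hmin.hasFDerivAt_eq_zero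
    ((hK.hasGradientAt_sfn_sq_div_two z).hasFDerivAt.sub (innerSL ℝ y).hasFDerivAt)
  refine ⟨z, ext_inner_right ℝ fun v => sub_eq_zero.1 ?_⟩
  simpa using DFunLike.congr_fun hzero v

lemma convex_dualityMap_preimage_singleton (hK : IsC2ConvexBody K) {y : Eu n} (hy : y ≠ 0) :
    Convex ℝ (dualityMap K ⁻¹' {y}) := by
  have heq : dualityMap K ⁻¹' {y} =
      {z ∈ Set.univ | sfn K z ≤ gauge K y} ∩ {z | gauge K y ^ 2 ≤ ⟪y, z⟫_ℝ} := by
    ext z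
    simp [hK.dualityMap_eq_iff hy]
  rw [heq]
  exact ((convexOn_sfn hK.isCompact hK.nonempty).convex_le _).inter
    (convex_halfSpace_ge (innerSL ℝ y).toLinearMap.isLinear _)

lemma det_fderiv_dualityMap_pos (hK : IsC2ConvexBody K) (hrK : ∀ x : Sph n, 0 < rK K x)
    {z : Eu n} (hz : z ≠ 0) : 0 < (fderiv ℝ (dualityMap K) z).det := by
  rw [(posHomogeneous_dualityMap K).fderiv.apply_eq_norm_pow_smul hz, pow_zero, one_smul]
  have hdet := hK.det_fderiv_dualityMap ⟨‖z‖⁻¹ • z, by simp [norm_smul, hz]⟩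
  rw [hdet]
  exact mul_pos (pow_pos (hK.sfn_coe_pos _) _) (hrK _)

lemma dualityMap_injective (hK : IsC2ConvexBody K) (hrK : ∀ x : Sph n, 0 < rK K x) :
    Function.Injective (dualityMap K) := by
  intro a b hab
  by_contra hne
  have hb : b ≠ 0 := by
    rintro rfl
    exact hne (hK.dualityMap_eq_zero_iff.1 (hab.trans (dualityMap_zero K)))
  -- A fibre is convex, and it is discrete by nondegeneracy of the derivative.
  have hperfect : Preperfect (dualityMap K ⁻¹' {dualityMap K b}) :=
    (hK.convex_dualityMap_preimage_singleton
      (hK.dualityMap_eq_zero_iff.not.2 hb)).isPreconnected.preperfect_of_nontrivial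
      ⟨a, hab, b, rfl, hne⟩
  refine accPt_iff_frequently_nhdsNE.1 (hperfect b rfl) ?_
  refine (hK.differentiableAt_dualityMap hb).hasFDerivAt.eventually_ne ⟨_,
    (ContinuousLinearMap.toContinuousLinearEquivOfDetNeZero _
      (hK.det_fderiv_dualityMap_pos hrK hb).ne').antilipschitz⟩

lemma integral_eq_integral_det_fderiv_dualityMap_mul (hK : IsC2ConvexBody K)
    (hrK : ∀ x : Sph n, 0 < rK K x) (g : Eu n → ℝ) :
    ∫ y, g y = ∫ z, (fderiv ℝ (dualityMap K) z).det * g (dualityMap K z) := by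
  have hinj := hK.dualityMap_injective hrK
  have himage : dualityMap K '' {0}ᶜ = {0}ᶜ := by
    rw [Set.image_compl_eq ⟨hinj, hK.dualityMap_surjective⟩, Set.image_singleton, dualityMap_zero]
  have hrestrict : (volume : Measure (Eu n)).restrict {0}ᶜ = volume :=
    Measure.restrict_eq_self_of_ae_mem (volume.ae_ne 0)
  have h := integral_image_eq_integral_abs_det_fderiv_smul volume (measurableSet_singleton _).compl
    (fun z hz => (hK.differentiableAt_dualityMap hz).hasFDerivAt.hasFDerivWithinAt) hinj.injOn g
  rw [himage, hrestrict] at h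
  rw [h]
  refine integral_congr_ae ?_
  filter_upwards [volume.ae_ne (0 : Eu n)] with z hz
  rw [abs_of_pos (hK.det_fderiv_dualityMap_pos hrK hz), smul_eq_mul]

end IsC2ConvexBody

end Gauge

section SecondDifference

variable {E : Type*} [NormedAddCommGroup E] [InnerProductSpace ℝ E] [CompleteSpace E]
  {f : E → ℝ} {G : E → E}

lemma hasDerivAt_comp_add_smul {f' : E} {z e : E} {s : ℝ} (hf : HasGradientAt f f' (z + s • e)) :
    HasDerivAt (fun t : ℝ => f (z + t • e)) ⟪f', e⟫_ℝ s := by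
  have hline : HasDerivAt (fun t : ℝ => z + t • e) e s := by
    simpa using ((hasDerivAt_id s).smul_const e).const_add z
  exact (hf.hasFDerivAt.comp_hasDerivAt s hline).congr_deriv (by simp)

lemma tendsto_symmDiff_div {f' z : E} (hf : HasGradientAt f f' z) (e : E) :
    Tendsto (fun s : ℝ => (f (z + s • e) - f (z - s • e)) / s) (𝓝[>] 0) (𝓝 (2 * ⟪f', e⟫_ℝ)) := by
  have hpos := (hasDerivAt_comp_add_smul (z := z) (e := e) (s := 0)
    (by simpa using hf)).tendsto_slope_zero_right
  have hneg := (hasDerivAt_comp_add_smul (z := z) (e := -e) (s := 0)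
    (by simpa using hf)).tendsto_slope_zero_right
  have hsub := hpos.sub hneg
  rw [inner_neg_right, sub_neg_eq_add, ← two_mul] at hsub
  refine hsub.congr fun s => ?_
  simp only [zero_add, smul_neg, ← sub_eq_add_neg, smul_eq_mul, zero_smul, add_zero, sub_zero]
  ring

lemma hasDerivAt_secondDiff (hf : ∀ x, HasGradientAt f (G x) x) (z e : E) (s : ℝ) :
    HasDerivAt (fun t : ℝ => f (z + t • e) + f (z - t • e) - 2 * f z)
      ⟪G (z + s • e) - G (z - s • e), e⟫_ℝ s := by
  have hadd := (hasDerivAt_comp_add_smul (hf (z + s • e))).add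
    (hasDerivAt_comp_add_smul (hf (z + s • (-e))))
  simp only [smul_neg, ← sub_eq_add_neg] at hadd
  exact (hadd.sub_const (2 * f z)).congr_deriv
    (by rw [inner_sub_left, inner_neg_right, ← sub_eq_add_neg])

lemma abs_secondDiff_le {L : NNReal} (hf : ∀ x, HasGradientAt f (G x) x) (hG : LipschitzWith L G)
    (z e : E) : |f (z + e) + f (z - e) - 2 * f z| ≤ 2 * L * ‖e‖ ^ 2 := by
  have hderiv : ∀ t ∈ Set.Ico (0 : ℝ) 1,
      ‖⟪G (z + t • e) - G (z - t • e), e⟫_ℝ‖ ≤ 2 * L * ‖e‖ ^ 2 := fun t ht => calc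
    _ ≤ ‖G (z + t • e) - G (z - t • e)‖ * ‖e‖ := norm_inner_le_norm _ _
    _ ≤ L * ‖(z + t • e) - (z - t • e)‖ * ‖e‖ := by gcongr; exact hG.norm_sub_le _ _
    _ = L * (2 * t * ‖e‖) * ‖e‖ := by
      rw [show (z + t • e) - (z - t • e) = (2 * t) • e by module, norm_smul,
        norm_of_nonneg (by linarith [ht.1])]
    _ ≤ L * (2 * 1 * ‖e‖) * ‖e‖ := by gcongr; exact ht.2.le
    _ = 2 * L * ‖e‖ ^ 2 := by ring
  have h := norm_image_sub_le_of_norm_deriv_le_segment_01'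
    (fun t _ => (hasDerivAt_secondDiff hf z e t).hasDerivWithinAt) hderiv
  simpa [← two_mul] using h

lemma tendsto_secondDiff_div_sq {G' : E →L[ℝ] E} {z : E} (hf : ∀ x, HasGradientAt f (G x) x)
    (hG : HasFDerivAt G G' z) (e : E) :
    Tendsto (fun s : ℝ => (f (z + s • e) + f (z - s • e) - 2 * f z) / s ^ 2) (𝓝[>] 0)
      (𝓝 ⟪G' e, e⟫_ℝ) := by
  have hcont := (hasDerivAt_secondDiff hf z e 0).continuousAt.tendsto.mono_left
    (nhdsWithin_le_nhds (s := Set.Ioi 0))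
  refine HasDerivAt.lhopital_zero_nhdsGT (.of_forall (hasDerivAt_secondDiff hf z e))
    (.of_forall fun s => hasDerivAt_pow 2 s) ?_ (by simpa [← two_mul] using hcont) ?_ ?_
  · filter_upwards [self_mem_nhdsWithin] with s (hs : 0 < s)
    simpa using hs.ne'
  · exact (by simpa using (continuous_pow 2).tendsto (0 : ℝ) :
      Tendsto (fun s : ℝ => s ^ 2) (𝓝 0) (𝓝 0)).mono_left nhdsWithin_le_nhds
  · have hgrad : HasGradientAt (fun x => ⟪G x, e⟫_ℝ) (G'.adjoint e) z := by
      rw [hasGradientAt_iff_hasFDerivAt]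
      refine (hG.inner ℝ (hasFDerivAt_const e z)).congr_fderiv ?_
      ext v
      simp [ContinuousLinearMap.adjoint_inner_left, real_inner_comm]
    have h := (tendsto_symmDiff_div hgrad e).div_const 2
    rw [ContinuousLinearMap.adjoint_inner_left, mul_div_cancel_left₀ _ two_ne_zero,
      real_inner_comm] at h
    refine h.congr fun s => ?_
    simp [inner_sub_left, div_div, mul_comm]

end SecondDifference

section VarianceInDualCoordinates

variable {n : ℕ} {K : Set (Eu n)}

/-- The second-order difference quotient, at `z` in the direction `e` with step `s`, that dominates
the midpoint defect of the perturbed potential `g ^ 2 / 2 ∓ s (⟪·, e⟫ - c g)`, where `g` is the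
gauge of `K`. -/
def secondDiffQuotient (K : Set (Eu n)) (e : Eu n) (c s : ℝ) (z : Eu n) : ℝ :=
  ((sfn K (z + s • e) - s * c) ^ 2 / 2 + (sfn K (z - s • e) + s * c) ^ 2 / 2 - sfn K z ^ 2) / s ^ 2

lemma secondDiffQuotient_eq (e : Eu n) (c : ℝ) {s : ℝ} (hs : s ≠ 0) (z : Eu n) :
    secondDiffQuotient K e c s z =
      (sfn K (z + s • e) ^ 2 / 2 + sfn K (z - s • e) ^ 2 / 2 - 2 * (sfn K z ^ 2 / 2)) / s ^ 2 -
        c * ((sfn K (z + s • e) - sfn K (z - s • e)) / s) + c ^ 2 := by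
  rw [secondDiffQuotient]
  field_simp
  ring

namespace IsC2ConvexBody

lemma measurable_secondDiffQuotient (hK : IsC2ConvexBody K) (e : Eu n) (c s : ℝ) :
    Measurable (secondDiffQuotient K e c s) := by
  have := hK.continuous_sfn
  exact Continuous.measurable (by unfold secondDiffQuotient; fun_prop)

lemma exists_abs_secondDiffQuotient_le (hK : IsC2ConvexBody K) (e : Eu n) (c : ℝ) :
    ∃ D, ∀ s > 0, ∀ z, |secondDiffQuotient K e c s z| ≤ D := by
  obtain ⟨L, hL⟩ := hK.exists_lipschitzWith_dualityMap
  obtain ⟨R, hR, -⟩ := exists_lipschitzWith_sfn hK.isCompact hK.nonempty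
  refine ⟨2 * L * ‖e‖ ^ 2 + |c| * (2 * R * ‖e‖) + c ^ 2, fun s hs z => ?_⟩
  have hsecond := abs_secondDiff_le hK.hasGradientAt_sfn_sq_div_two hL z (s • e)
  have hfirst : |sfn K (z + s • e) - sfn K (z - s • e)| ≤ R * (2 * s * ‖e‖) := by
    rw [← norm_eq_abs, ← norm_of_nonneg (by positivity : (0 : ℝ) ≤ 2 * s), ← norm_smul,
      show (2 * s) • e = z + s • e - (z - s • e) by module]
    exact hR.norm_sub_le _ _
  rw [norm_smul, norm_of_nonneg hs.le] at hsecond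
  rw [secondDiffQuotient_eq e c hs.ne' z]
  refine (abs_add_le _ _).trans
    (add_le_add ((abs_sub _ _).trans (add_le_add ?_ ?_)) (abs_of_nonneg (sq_nonneg c)).le)
  · rw [abs_div, abs_of_pos (pow_pos hs 2), div_le_iff₀ (pow_pos hs 2)]
    linarith
  · rw [abs_mul, abs_div, abs_of_pos hs]
    gcongr
    rw [div_le_iff₀ hs]
    linarith

lemma tendsto_secondDiffQuotient (hK : IsC2ConvexBody K) (e : Eu n) (c : ℝ) {z : Eu n}
    (hz : z ≠ 0) : Tendsto (secondDiffQuotient K e c · z) (𝓝[>] 0)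
      (𝓝 (sfn K z * ⟪hessA K z e, e⟫_ℝ + (⟪gradient (sfn K) z, e⟫_ℝ - c) ^ 2)) := by
  have hsecond := tendsto_secondDiff_div_sq hK.hasGradientAt_sfn_sq_div_two
    (hK.differentiableAt_dualityMap hz).hasFDerivAt e
  have hfirst := tendsto_symmDiff_div (hK.hasGradientAt_sfn hz) e
  have hlim : ⟪fderiv ℝ (dualityMap K) z e, e⟫_ℝ - c * (2 * ⟪gradient (sfn K) z, e⟫_ℝ) + c ^ 2 =
      sfn K z * ⟪hessA K z e, e⟫_ℝ + (⟪gradient (sfn K) z, e⟫_ℝ - c) ^ 2 := by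
    simp only [hK.fderiv_dualityMap hz, add_apply, smul_apply,
      ContinuousLinearMap.smulRight_apply, innerSL_apply_apply, inner_add_left,
      real_inner_smul_left]
    ring
  refine hlim ▸ ((hsecond.sub (hfirst.const_mul c)).add_const (c ^ 2)).congr' ?_
  filter_upwards [self_mem_nhdsWithin] with s (hs : 0 < s)
  exact (secondDiffQuotient_eq e c hs.ne' z).symm

lemma gauge_midpoint_sub_secondDiffQuotient_le (hK : IsC2ConvexBody K) (e : Eu n) (c : ℝ) {s : ℝ}
    (hs : s ≠ 0) {a b z : Eu n} (hz : dualityMap K z = midpoint ℝ a b) :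
    2 * (gauge K (midpoint ℝ a b) ^ 2 / 2) - s ^ 2 * secondDiffQuotient K e c s z ≤
      (gauge K a ^ 2 / 2 - s * (⟪a, e⟫_ℝ - c * gauge K a)) +
        (gauge K b ^ 2 / 2 + s * (⟪b, e⟫_ℝ - c * gauge K b)) := by
  have ha := hK.inner_le_gauge_mul_sfn a (z + s • e)
  have hb := hK.inner_le_gauge_mul_sfn b (z - s • e)
  have hab : ⟪a, z⟫_ℝ + ⟪b, z⟫_ℝ = 2 * sfn K z ^ 2 := by
    rw [← hK.inner_dualityMap_self, ← real_inner_smul_left, hz, ← inner_add_left, two_smul,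
      midpoint_add_self]
  rw [inner_add_right, inner_smul_right] at ha
  rw [inner_sub_right, inner_smul_right] at hb
  rw [← hz, hK.gauge_dualityMap, secondDiffQuotient, mul_div_cancel₀ _ (pow_ne_zero 2 hs)]
  nlinarith [sq_nonneg (gauge K a - (sfn K (z + s • e) - s * c)),
    sq_nonneg (gauge K b - (sfn K (z - s • e) + s * c))]

lemma exists_mul_norm_sq_le_gauge_sq_div_two (hK : IsC2ConvexBody K) :
    ∃ κ > 0, ∀ y, κ * ‖y‖ ^ 2 ≤ gauge K y ^ 2 / 2 := by
  obtain ⟨R, hR0, hR⟩ := hK.exists_norm_le_mul_gauge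
  refine ⟨1 / (2 * R ^ 2), by positivity, fun y => ?_⟩
  rw [one_div_mul_eq_div, div_le_iff₀ (by positivity)]
  calc ‖y‖ ^ 2 ≤ (R * gauge K y) ^ 2 := by gcongr; exact hR y
    _ = gauge K y ^ 2 / 2 * (2 * R ^ 2) := by ring

lemma variance_tilted_gauge_le (hK : IsC2ConvexBody K) (hrK : ∀ x : Sph n, 0 < rK K x) (e : Eu n)
    (c : ℝ) : Var[fun y => ⟪y, e⟫_ℝ - c * gauge K y; volume.tilted fun y => -(gauge K y ^ 2 / 2)] ≤
      ∫ y, Function.extend (dualityMap K) (fun z => sfn K z * ⟪hessA K z e, e⟫_ℝ +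
        (⟪gradient (sfn K) z, e⟫_ℝ - c) ^ 2) 0 y ∂volume.tilted fun y => -(gauge K y ^ 2 / 2) := by
  obtain ⟨κ, hκ, hκg⟩ := hK.exists_mul_norm_sq_le_gauge_sq_div_two
  obtain ⟨C, hC⟩ := hK.exists_gauge_le_mul_norm
  obtain ⟨D, hD⟩ := hK.exists_abs_secondDiffQuotient_le e c
  have hg := hK.continuous_gauge.measurable
  have hinj := hK.dualityMap_injective hrK
  refine variance_tilted_le_integral (C := ‖e‖ + |c| * C) (D := D)
    (q := fun s => Function.extend (dualityMap K) (secondDiffQuotient K e c s) 0) hκ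
    (by fun_prop) (by fun_prop) hκg (fun y => ?_) (fun s _ => ?_) (fun s hs y => ?_) ?_
    (fun s hs a b => ?_)
  · calc |⟪y, e⟫_ℝ - c * gauge K y| ≤ |⟪y, e⟫_ℝ| + |c * gauge K y| := abs_sub _ _
      _ ≤ ‖y‖ * ‖e‖ + |c| * (C * ‖y‖) := by
        rw [abs_mul, abs_of_nonneg (gauge_nonneg y)]
        gcongr
        exacts [abs_real_inner_le_norm y e, hC y]
      _ = (‖e‖ + |c| * C) * ‖y‖ := by ring
  · exact (hK.continuous_dualityMap.measurableEmbedding hinj).measurable_extend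
      (hK.measurable_secondDiffQuotient e c s) measurable_const
  · obtain ⟨z, rfl⟩ := hK.dualityMap_surjective y
    rw [hinj.extend_apply]
    exact hD s hs z
  · filter_upwards [volume.ae_ne (0 : Eu n)] with y hy
    obtain ⟨z, rfl⟩ := hK.dualityMap_surjective y
    simp only [hinj.extend_apply]
    exact hK.tendsto_secondDiffQuotient e c (hK.dualityMap_eq_zero_iff.not.1 hy)
  · obtain ⟨z, hz⟩ := hK.dualityMap_surjective (midpoint ℝ a b)
    rw [← hz, hinj.extend_apply, hz]
    exact hK.gauge_midpoint_sub_secondDiffQuotient_le e c hs.ne' hz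

lemma integral_det_mul_sq_mul_exp_le (hK : IsC2ConvexBody K) (hrK : ∀ x : Sph n, 0 < rK K x)
    (e : Eu n) (c : ℝ)
    (hmean : ∫ z, (fderiv ℝ (dualityMap K) z).det *
      ((⟪dualityMap K z, e⟫_ℝ - c * sfn K z) * exp (-(sfn K z ^ 2 / 2))) = 0) :
    ∫ z, (fderiv ℝ (dualityMap K) z).det *
        ((⟪dualityMap K z, e⟫_ℝ - c * sfn K z) ^ 2 * exp (-(sfn K z ^ 2 / 2))) ≤
      ∫ z, (fderiv ℝ (dualityMap K) z).det *
        ((sfn K z * ⟪hessA K z e, e⟫_ℝ + (⟪gradient (sfn K) z, e⟫_ℝ - c) ^ 2) *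
          exp (-(sfn K z ^ 2 / 2))) := by
  obtain ⟨κ, hκ, hκg⟩ := hK.exists_mul_norm_sq_le_gauge_sq_div_two
  have hg := hK.continuous_gauge.measurable
  have hint : Integrable fun y => exp (-(gauge K y ^ 2 / 2)) :=
    integrable_exp_of_le_sub_norm_sq (C := 0) (by fun_prop) hκ fun y => by linarith [hκg y]
  have hvar := integral_sq_mul_exp_le_of_variance_tilted_le hint (by fun_prop)
    (by rwa [hK.integral_eq_integral_det_fderiv_dualityMap_mul hrK,
      integral_congr_ae (.of_forall fun z => by rw [hK.gauge_dualityMap])])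
    (hK.variance_tilted_gauge_le hrK e c)
  rw [hK.integral_eq_integral_det_fderiv_dualityMap_mul hrK fun y =>
      (⟪y, e⟫_ℝ - c * gauge K y) ^ 2 * exp (-(gauge K y ^ 2 / 2)),
    hK.integral_eq_integral_det_fderiv_dualityMap_mul hrK fun y => Function.extend _ _ _ y * _]
    at hvar
  simpa only [hK.gauge_dualityMap, (hK.dualityMap_injective hrK).extend_apply] using hvar

end IsC2ConvexBody

end VarianceInDualCoordinates

section SphericalVariance

variable {n : ℕ} {K : Set (Eu n)}

instance : IsFiniteMeasure (sphMeas n) :=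
  inferInstanceAs (IsFiniteMeasure (volume : Measure (Eu n)).toSphere)

instance : NeZero (sphMeas n) :=
  ⟨Measure.toSphere_ne_zero _⟩

lemma integrable_sphMeas_of_continuousOn {F : Type*} [NormedAddCommGroup F] {f : Eu n → F}
    (hf : ContinuousOn f {0}ᶜ) : Integrable (fun x : Sph n => f x) (sphMeas n) :=
  integrable_toSphere_of_continuousOn volume hf

lemma integral_sphMeas_pos {f : Eu n → ℝ} (hf : ContinuousOn f {0}ᶜ)
    (hpos : ∀ x : Sph n, 0 < f x) : 0 < ∫ x : Sph n, f x ∂sphMeas n := by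
  refine (integral_pos_iff_support_of_nonneg (fun x => (hpos x).le)
    (integrable_sphMeas_of_continuousOn hf)).2 ?_
  rw [Function.support_eq_univ fun x => (hpos x).ne', Measure.measure_univ_pos]
  exact NeZero.ne _

lemma posHomogeneous_sfn_smul_hessA (K : Set (Eu n)) :
    PosHomogeneous 0 fun z => sfn K z • hessA K z := by
  intro ρ hρ z
  have hgrad : (fun w => gradient (sfn K) (ρ • w)) = gradient (sfn K) :=
    funext fun w => by simpa using (posHomogeneous_sfn K).gradient (k := 0) hρ w
  have hhess : ρ • hessA K (ρ • z) = hessA K z := by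
    rw [hessA, ← fderiv_comp_smul, hgrad, hessA]
  simp only [posHomogeneous_sfn K hρ z, pow_one, pow_zero, one_smul, smul_eq_mul, mul_comm ρ,
    mul_smul, hhess]

namespace IsC2ConvexBody

lemma continuousOn_gradient_sfn (hK : IsC2ConvexBody K) :
    ContinuousOn (gradient (sfn K)) {0}ᶜ :=
  hK.contDiffOn_gradient_sfn.continuousOn

lemma continuousOn_hessA (hK : IsC2ConvexBody K) : ContinuousOn (hessA K) {0}ᶜ :=
  hK.contDiffOn_gradient_sfn.continuousOn_fderiv_of_isOpen isOpen_compl_singleton le_rfl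

lemma continuousOn_det_fderiv_dualityMap (hK : IsC2ConvexBody K) :
    ContinuousOn (fun z => (fderiv ℝ (dualityMap K) z).det) {0}ᶜ :=
  ContinuousLinearMap.continuous_det.comp_continuousOn
    (hK.contDiffOn_dualityMap.continuousOn_fderiv_of_isOpen isOpen_compl_singleton le_rfl)

lemma dens_eq_det_div (hK : IsC2ConvexBody K) (x : Sph n) :
    dens K x = (fderiv ℝ (dualityMap K) x).det / sfn K x ^ (n + 1) := by
  rw [hK.det_fderiv_dualityMap, dens, eq_div_iff (pow_pos (hK.sfn_coe_pos x) _).ne']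
  ring

lemma continuousOn_dens (hK : IsC2ConvexBody K) : ContinuousOn (dens K) {0}ᶜ :=
  hK.continuous_sfn.continuousOn.mul (ContinuousLinearMap.continuous_det.comp_continuousOn
    (hK.continuousOn_hessA.add
      ((InnerProductSpace.rankOne ℝ).continuous.clm_apply continuous_id).continuousOn))

lemma integral_det_fderiv_dualityMap_mul_exp (hK : IsC2ConvexBody K) {k : ℕ} {G : Eu n → ℝ}
    (hG : PosHomogeneous k G) (hGc : ContinuousOn G {0}ᶜ) :
    ∫ z, (fderiv ℝ (dualityMap K) z).det * (G z * exp (-(sfn K z ^ 2 / 2))) =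
      halfGaussianMoment (n + k) * ∫ x : Sph n, dens K x * (G x / sfn K x ^ k) ∂sphMeas n := by
  have hdet : PosHomogeneous 0 fun z => (fderiv ℝ (dualityMap K) z).det := fun ρ hρ z => by
    simp [(posHomogeneous_dualityMap K).fderiv (k := 0) hρ z]
  have hpolar := (hdet.mul hG).integral_mul_exp_neg_sq volume finrank_euclideanSpace_fin
    (hK.continuousOn_det_fderiv_dualityMap.mul hGc) (posHomogeneous_sfn K)
    hK.continuous_sfn.continuousOn fun x => hK.sfn_pos
  simp only [zero_add, mul_assoc] at hpolar
  rw [hpolar, sphMeas]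
  congr 2 with x
  rw [hK.dens_eq_det_div, div_mul_div_comm, ← pow_add, add_right_comm]

lemma integral_dens_pos (hK : IsC2ConvexBody K) (hd : ∀ x : Sph n, 0 < dens K x) :
    0 < ∫ x : Sph n, dens K x ∂sphMeas n :=
  integral_sphMeas_pos hK.continuousOn_dens hd

lemma integral_dens_mul_inner_gradient_sub_cK (hK : IsC2ConvexBody K)
    (hd : ∀ x : Sph n, 0 < dens K x) (e : Eu n) :
    ∫ x : Sph n, dens K x * (⟪gradient (sfn K) x, e⟫_ℝ - ⟪cK K, e⟫_ℝ) ∂sphMeas n = 0 := by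
  have hgrad := hK.continuousOn_gradient_sfn
  have hdens := hK.continuousOn_dens
  have hint : Integrable (fun x : Sph n => dens K x • gradient (sfn K) x) (sphMeas n) :=
    integrable_sphMeas_of_continuousOn (hdens.smul hgrad)
  have hinner : ∫ x : Sph n, dens K x * ⟪gradient (sfn K) x, e⟫_ℝ ∂sphMeas n =
      ⟪∫ x : Sph n, dens K x • gradient (sfn K) x ∂sphMeas n, e⟫_ℝ := by
    rw [real_inner_comm, ← integral_inner hint]
    simp only [inner_smul_right, real_inner_comm]
  simp only [mul_sub]
  rw [integral_sub
      (integrable_sphMeas_of_continuousOn (f := fun x => dens K x * ⟪gradient (sfn K) x, e⟫_ℝ)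
        (by fun_prop))
      ((integrable_sphMeas_of_continuousOn hdens).mul_const _),
    integral_mul_const, hinner, cK, real_inner_smul_left,
    mul_inv_cancel_left₀ (hK.integral_dens_pos hd).ne', sub_self]

theorem integral_dens_mul_sq_inner_gradient_sub_cK_le (hK : IsC2ConvexBody K)
    (hd : ∀ x : Sph n, 0 < dens K x) (e : Eu n) :
    n * ∫ x : Sph n, dens K x * (⟪gradient (sfn K) x, e⟫_ℝ - ⟪cK K, e⟫_ℝ) ^ 2 ∂sphMeas n ≤
      ∫ x : Sph n, dens K x * (sfn K x * ⟪hessA K x e, e⟫_ℝ) ∂sphMeas n := by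
  have hrK (x : Sph n) : 0 < rK K x := (mul_pos_iff_of_pos_left (hK.sfn_coe_pos x)).1 (hd x)
  set c := ⟪cK K, e⟫_ℝ with hc
  have hsfn := hK.continuous_sfn
  have hdual := hK.continuous_dualityMap
  have hgrad := hK.continuousOn_gradient_sfn
  have hhess := hK.continuousOn_hessA
  have hlin : PosHomogeneous 1 fun z => ⟪dualityMap K z, e⟫_ℝ - c * sfn K z :=
    ((posHomogeneous_dualityMap K).inner_left e).sub
      ((posHomogeneous_sfn K).clm_apply (ContinuousLinearMap.mul ℝ ℝ c))
  have hquad : PosHomogeneous 0 fun z =>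
      sfn K z * ⟪hessA K z e, e⟫_ℝ + (⟪gradient (sfn K) z, e⟫_ℝ - c) ^ 2 := fun ρ hρ z => by
    have hA := congrArg (fun A => ⟪A e, e⟫_ℝ) (posHomogeneous_sfn_smul_hessA K hρ z)
    have hG := (posHomogeneous_sfn K).gradient (k := 0) hρ z
    simp only [smul_apply, real_inner_smul_left, pow_zero, one_smul] at hA hG ⊢
    rw [hA, hG]
  have hcoe (x : Sph n) :
      ⟪dualityMap K x, e⟫_ℝ - c * sfn K x = (⟪gradient (sfn K) x, e⟫_ℝ - c) * sfn K x := by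
    rw [dualityMap, real_inner_smul_left]
    ring
  have hpow (x : Sph n) (m : ℕ) : sfn K x ^ m ≠ 0 := (pow_pos (hK.sfn_coe_pos x) m).ne'
  have hvar := hK.integral_det_mul_sq_mul_exp_le hrK e c (by
    rw [hK.integral_det_fderiv_dualityMap_mul_exp hlin (by fun_prop)]
    simp only [hcoe, pow_one, mul_div_cancel_right₀ _ (hK.sfn_coe_pos _).ne']
    rw [hc, hK.integral_dens_mul_inner_gradient_sub_cK hd, mul_zero])
  rw [hK.integral_det_fderiv_dualityMap_mul_exp (hlin.pow 2) (by fun_prop),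
    hK.integral_det_fderiv_dualityMap_mul_exp hquad (by fun_prop), one_mul, add_zero,
    halfGaussianMoment_add_two, mul_comm (_ + 1), mul_assoc] at hvar
  simp only [hcoe, mul_pow, mul_div_cancel_right₀ _ (hpow _ _), pow_zero, div_one, mul_add] at hvar
  have hdens := hK.continuousOn_dens
  rw [integral_add
    (integrable_sphMeas_of_continuousOn (f := fun x => dens K x * (sfn K x * ⟪hessA K x e, e⟫_ℝ))
      (by fun_prop))
    (integrable_sphMeas_of_continuousOn
      (f := fun x => dens K x * (⟪gradient (sfn K) x, e⟫_ℝ - c) ^ 2) (by fun_prop))] at hvar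
  linarith [le_of_mul_le_mul_left hvar (halfGaussianMoment_pos n)]

end IsC2ConvexBody

end SphericalVariance

section TranslatedSupportFunction

variable {n : ℕ} {K : Set (Eu n)}

lemma posHomogeneous_tsfn (K : Set (Eu n)) : PosHomogeneous 1 (tsfn K) :=
  (posHomogeneous_sfn K).sub (posHomogeneous_inner (cK K))

lemma integral_tsfn (hK : IsC2ConvexBody K) :
    ∫ x : Sph n, tsfn K x ∂sphMeas n = ∫ x : Sph n, sfn K x ∂sphMeas n := by
  simp only [tsfn]
  rw [integral_sub (integrable_sphMeas_of_continuousOn hK.continuous_sfn.continuousOn)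
    (integrable_sphMeas_of_continuousOn (f := fun x => ⟪x, cK K⟫_ℝ) (by fun_prop)), sphMeas,
    integral_inner_toSphere, sub_zero]

namespace IsC2ConvexBody

lemma contDiffOn_tsfn (hK : IsC2ConvexBody K) : ContDiffOn ℝ 2 (tsfn K) {0}ᶜ :=
  hK.contDiffOn_sfn.sub (contDiff_id.inner ℝ contDiff_const).contDiffOn

lemma differentiableAt_tsfn (hK : IsC2ConvexBody K) {z : Eu n} (hz : z ≠ 0) :
    DifferentiableAt ℝ (tsfn K) z :=
  (hK.contDiffOn_tsfn.contDiffAt (isOpen_compl_singleton.mem_nhds hz)).differentiableAt two_ne_zero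

lemma gradient_tsfn (hK : IsC2ConvexBody K) {z : Eu n} (hz : z ≠ 0) :
    gradient (tsfn K) z = gradient (sfn K) z - cK K := by
  refine HasGradientAt.gradient (hasGradientAt_iff_hasFDerivAt.2 ?_)
  rw [map_sub]
  refine ((hK.hasGradientAt_sfn hz).hasFDerivAt.sub
    (innerSL ℝ (cK K)).hasFDerivAt).congr_of_eventuallyEq (.of_forall fun w => ?_)
  simp [tsfn, real_inner_comm]

lemma continuousOn_gradient_tsfn (hK : IsC2ConvexBody K) :
    ContinuousOn (gradient (tsfn K)) {0}ᶜ :=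
  (hK.continuousOn_gradient_sfn.sub continuousOn_const).congr fun _ hz => hK.gradient_tsfn hz

lemma fderiv_gradient_tsfn (hK : IsC2ConvexBody K) {z : Eu n} (hz : z ≠ 0) :
    fderiv ℝ (gradient (tsfn K)) z = hessA K z := by
  have hgrad : gradient (tsfn K) =ᶠ[𝓝 z] fun w => gradient (sfn K) w - cK K := by
    filter_upwards [isOpen_compl_singleton.mem_nhds hz] with w hw using hK.gradient_tsfn hw
  rw [hgrad.fderiv_eq, fderiv_sub_const, hessA]

lemma inner_gradient_tsfn (hK : IsC2ConvexBody K) {z : Eu n} (hz : z ≠ 0) :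
    ⟪z, gradient (tsfn K) z⟫_ℝ = tsfn K z := by
  simpa using (posHomogeneous_tsfn K).inner_gradient_self (hK.differentiableAt_tsfn hz)

lemma inner_sub_gradient_sfn_nonneg (hK : IsC2ConvexBody K) {z w : Eu n} (hz : z ≠ 0)
    (hw : w ≠ 0) : 0 ≤ ⟪w - z, gradient (sfn K) w - gradient (sfn K) z⟫_ℝ := by
  have hzw := inner_le_sfn hK.isCompact z (hK.gradient_sfn_mem hw)
  have hwz := inner_le_sfn hK.isCompact w (hK.gradient_sfn_mem hz)
  rw [← hK.inner_gradient_sfn hz] at hzw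
  rw [← hK.inner_gradient_sfn hw] at hwz
  simp only [inner_sub_left, inner_sub_right]
  linarith

lemma inner_hessA_self_nonneg (hK : IsC2ConvexBody K) {z : Eu n} (hz : z ≠ 0) (v : Eu n) :
    0 ≤ ⟪hessA K z v, v⟫_ℝ := by
  have hline : HasDerivAt (fun t : ℝ => z + t • v) v 0 := by
    simpa using ((hasDerivAt_id (0 : ℝ)).smul_const v).const_add z
  have hgrad : HasFDerivAt (gradient (sfn K)) (hessA K z) (z + (0 : ℝ) • v) := by
    simpa using hK.hasFDerivAt_gradient_sfn hz
  have hderiv : HasDerivAt (fun t : ℝ => ⟪gradient (sfn K) (z + t • v), v⟫_ℝ)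
      ⟪hessA K z v, v⟫_ℝ 0 := by
    simpa using (hgrad.comp_hasDerivAt (0 : ℝ) hline).inner ℝ (hasDerivAt_const (0 : ℝ) v)
  have hne : ∀ᶠ t : ℝ in 𝓝[>] 0, z + t • v ≠ 0 :=
    (hline.continuousAt.eventually_ne (by simpa using hz)).filter_mono nhdsWithin_le_nhds
  refine ge_of_tendsto hderiv.tendsto_slope_zero_right ?_
  filter_upwards [hne, self_mem_nhdsWithin] with t ht htpos
  have hmono := hK.inner_sub_gradient_sfn_nonneg hz ht
  rw [add_sub_cancel_left, real_inner_smul_left, real_inner_comm] at hmono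
  simp only [zero_add, zero_smul, add_zero, ← inner_sub_left, smul_eq_mul]
  exact mul_nonneg (inv_pos.2 htpos).le (nonneg_of_mul_nonneg_right hmono htpos)

lemma continuousOn_trace_hessA (hK : IsC2ConvexBody K) :
    ContinuousOn (fun z => (hessA K z : Eu n →ₗ[ℝ] Eu n).trace ℝ (Eu n)) {0}ᶜ := by
  have hhess := hK.continuousOn_hessA
  simp only [LinearMap.trace_eq_sum_inner _ (stdOrthonormalBasis ℝ (Eu n)),
    ContinuousLinearMap.coe_coe]
  fun_prop

lemma trace_hessA_nonneg (hK : IsC2ConvexBody K) {z : Eu n} (hz : z ≠ 0) :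
    0 ≤ (hessA K z : Eu n →ₗ[ℝ] Eu n).trace ℝ (Eu n) := by
  rw [LinearMap.trace_eq_sum_inner _ (stdOrthonormalBasis ℝ (Eu n))]
  refine Finset.sum_nonneg fun i _ => ?_
  rw [real_inner_comm]
  exact hK.inner_hessA_self_nonneg hz _

end IsC2ConvexBody

end TranslatedSupportFunction

section GradientEnergy

variable {n : ℕ} {K : Set (Eu n)}

namespace IsC2ConvexBody

lemma integral_sfn_mul_trace_hessA (hK : IsC2ConvexBody K) :
    ∫ x : Sph n, sfn K x * (hessA K x : Eu n →ₗ[ℝ] Eu n).trace ℝ (Eu n) ∂sphMeas n =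
      (n + 1) * ∫ x : Sph n, tsfn K x ^ 2 ∂sphMeas n -
        ∫ x : Sph n, ‖gradient (tsfn K) x‖ ^ 2 ∂sphMeas n := by
  have htgrad := hK.continuousOn_gradient_tsfn
  have htsfn := hK.contDiffOn_tsfn.continuousOn
  have hgreen := integral_mul_trace_fderiv_gradient_toSphere (finrank_euclideanSpace_fin)
    (posHomogeneous_sfn K) (hK.contDiffOn_sfn.of_le one_le_two) (posHomogeneous_tsfn K)
    hK.contDiffOn_tsfn
  have hcenter := integral_fderiv_toSphere (k := 0) finrank_euclideanSpace_fin
    (posHomogeneous_tsfn K) (hK.contDiffOn_tsfn.of_le one_le_two) (cK K)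
  have hsq : ∫ x : Sph n, sfn K x * tsfn K x ∂sphMeas n =
      ∫ x : Sph n, tsfn K x ^ 2 ∂sphMeas n +
        ∫ x : Sph n, tsfn K x * ⟪(x : Eu n), cK K⟫_ℝ ∂sphMeas n := by
    rw [← integral_add
      (integrable_sphMeas_of_continuousOn (f := fun x => tsfn K x ^ 2) (by fun_prop))
      (integrable_sphMeas_of_continuousOn (f := fun x => tsfn K x * ⟪x, cK K⟫_ℝ) (by fun_prop))]
    congr! 2 with x
    rw [tsfn]
    ring
  have hgrad_sq : ∫ x : Sph n, ⟪gradient (sfn K) x, gradient (tsfn K) x⟫_ℝ ∂sphMeas n =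
      ∫ x : Sph n, ‖gradient (tsfn K) x‖ ^ 2 ∂sphMeas n +
        ∫ x : Sph n, fderiv ℝ (tsfn K) x (cK K) ∂sphMeas n := by
    simp only [← inner_gradient_left, real_inner_comm (cK K)]
    rw [← integral_add
      (integrable_sphMeas_of_continuousOn (f := fun x => ‖gradient (tsfn K) x‖ ^ 2) (by fun_prop))
      (integrable_sphMeas_of_continuousOn (f := fun x => ⟪cK K, gradient (tsfn K) x⟫_ℝ)
        (by fun_prop))]
    congr! 2 with x
    rw [hK.gradient_tsfn (ne_zero_of_mem_unit_sphere x), ← real_inner_self_eq_norm_sq,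
      ← inner_add_left, sub_add_cancel]
  rw [← sphMeas] at hgreen hcenter
  simp only [hK.fderiv_gradient_tsfn (ne_zero_of_mem_unit_sphere _)] at hgreen
  rw [hgreen, hsq, hgrad_sq, hcenter]
  push_cast
  ring

theorem integral_dens_mul_norm_gradient_tsfn_sq_le (hK : IsC2ConvexBody K)
    (hd : ∀ x : Sph n, 0 < dens K x) :
    n * ∫ x : Sph n, dens K x * ‖gradient (tsfn K) x‖ ^ 2 ∂sphMeas n ≤
      ∫ x : Sph n, dens K x * (sfn K x * (hessA K x : Eu n →ₗ[ℝ] Eu n).trace ℝ (Eu n))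
        ∂sphMeas n := by
  have hdens := hK.continuousOn_dens
  have hsfn := hK.continuous_sfn
  have hgrad := hK.continuousOn_gradient_sfn
  have hhess := hK.continuousOn_hessA
  let b := stdOrthonormalBasis ℝ (Eu n)
  have hsum := Finset.sum_le_sum fun i (_ : i ∈ Finset.univ) =>
    hK.integral_dens_mul_sq_inner_gradient_sub_cK_le hd (b i)
  rw [← Finset.mul_sum,
    ← integral_finsetSum _ fun i _ => integrable_sphMeas_of_continuousOn
      (f := fun x => dens K x * (⟪gradient (sfn K) x, b i⟫_ℝ - ⟪cK K, b i⟫_ℝ) ^ 2) (by fun_prop),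
    ← integral_finsetSum _ fun i _ => integrable_sphMeas_of_continuousOn
      (f := fun x => dens K x * (sfn K x * ⟪hessA K x (b i), b i⟫_ℝ)) (by fun_prop)] at hsum
  simpa only [← Finset.mul_sum, ← inner_sub_left, b.sum_sq_inner_left,
    ← hK.gradient_tsfn (ne_zero_of_mem_unit_sphere _), LinearMap.trace_eq_sum_inner _ b,
    ContinuousLinearMap.coe_coe, real_inner_comm] using hsum

lemma integral_tsfn_sq_le_integral_norm_gradient_tsfn_sq (hK : IsC2ConvexBody K) :
    ∫ x : Sph n, tsfn K x ^ 2 ∂sphMeas n ≤ ∫ x : Sph n, ‖gradient (tsfn K) x‖ ^ 2 ∂sphMeas n := by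
  refine integral_mono (integrable_sphMeas_of_continuousOn (hK.contDiffOn_tsfn.continuousOn.pow 2))
    (integrable_sphMeas_of_continuousOn (hK.continuousOn_gradient_tsfn.norm.pow 2)) fun x => ?_
  rw [← hK.inner_gradient_tsfn (ne_zero_of_mem_unit_sphere x)]
  refine sq_le_sq.2 ((abs_real_inner_le_norm _ _).trans_eq ?_)
  rw [norm_eq_of_mem_sphere, one_mul, abs_norm]

theorem integral_norm_gradient_tsfn_sq_sub_le (hK : IsC2ConvexBody K) {ε : ℝ} (hε : ε < 1)
    (hd : ∀ x : Sph n, 1 - ε ≤ dens K x ∧ dens K x ≤ 1 + ε) :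
    (n + 1) * (∫ x : Sph n, ‖gradient (tsfn K) x‖ ^ 2 ∂sphMeas n -
        ∫ x : Sph n, tsfn K x ^ 2 ∂sphMeas n) ≤
      2 * n * ε * ∫ x : Sph n, ‖gradient (tsfn K) x‖ ^ 2 ∂sphMeas n := by
  have hpos (x : Sph n) : 0 < dens K x := by linarith [(hd x).1]
  have hdens := hK.continuousOn_dens
  have hsfn := hK.continuous_sfn
  have hgrad := hK.continuousOn_gradient_tsfn
  have htrace := hK.continuousOn_trace_hessA
  set X := ∫ x : Sph n, ‖gradient (tsfn K) x‖ ^ 2 ∂sphMeas n with hX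
  set Y := ∫ x : Sph n, tsfn K x ^ 2 ∂sphMeas n
  have hlower : (1 - ε) * X ≤ ∫ x : Sph n, dens K x * ‖gradient (tsfn K) x‖ ^ 2 ∂sphMeas n := by
    rw [hX, ← integral_const_mul]
    refine integral_mono ((integrable_sphMeas_of_continuousOn (hgrad.norm.pow 2)).const_mul _)
      (integrable_sphMeas_of_continuousOn (hdens.mul (hgrad.norm.pow 2))) fun x => ?_
    dsimp only
    gcongr
    exact (hd x).1
  have hupper : ∫ x : Sph n, dens K x * (sfn K x * (hessA K x : Eu n →ₗ[ℝ] Eu n).trace ℝ (Eu n))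
      ∂sphMeas n ≤ (1 + ε) * ((n + 1) * Y - X) := by
    rw [← hK.integral_sfn_mul_trace_hessA, ← integral_const_mul]
    refine integral_mono (integrable_sphMeas_of_continuousOn
        (hdens.mul (hsfn.continuousOn.mul htrace)))
      ((integrable_sphMeas_of_continuousOn (hsfn.continuousOn.mul htrace)).const_mul _) fun x => ?_
    exact mul_le_mul_of_nonneg_right (hd x).2 (mul_nonneg (hK.sfn_coe_pos x).le
      (hK.trace_hessA_nonneg (ne_zero_of_mem_unit_sphere x)))
  have hvar := hK.integral_dens_mul_norm_gradient_tsfn_sq_le hpos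
  obtain ⟨x⟩ : Nonempty (Sph n) := (NormedSpace.sphere_nonempty.2 zero_le_one).to_subtype
  have hε : 0 ≤ ε := by linarith [(hd x).1, (hd x).2]
  nlinarith [mul_le_mul_of_nonneg_left hlower (Nat.cast_nonneg (α := ℝ) n),
    mul_nonneg hε (sub_nonneg.2 hK.integral_tsfn_sq_le_integral_norm_gradient_tsfn_sq)]

end IsC2ConvexBody

end GradientEnergy

section MeanRadius

/-- The spherical mean of the support function of `K - c(K)`, half the mean width of `K`: the factor
by which `K - c(K)` is shrunk to the normalized body `K̄`. -/
def meanRadius {n : ℕ} (K : Set (Eu n)) : ℝ := ⨍ x : Sph n, tsfn K x ∂sphMeas n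

variable {n : ℕ} {K : Set (Eu n)}

instance : Nonempty (Sph n) := (NormedSpace.sphere_nonempty.2 zero_le_one).to_subtype

namespace IsC2ConvexBody

lemma measureReal_univ_mul_meanRadius (hK : IsC2ConvexBody K) :
    (sphMeas n).real Set.univ * meanRadius K = ∫ x : Sph n, sfn K x ∂sphMeas n := by
  rw [← integral_tsfn hK, ← measure_smul_average, smul_eq_mul, meanRadius]

lemma meanRadius_pos (hK : IsC2ConvexBody K) : 0 < meanRadius K := by
  have hint := integral_sphMeas_pos hK.continuous_sfn.continuousOn hK.sfn_coe_pos
  rw [← hK.measureReal_univ_mul_meanRadius] at hint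
  exact pos_of_mul_pos_right hint measureReal_nonneg

lemma inner_mul_norm_add_inner_le (hK : IsC2ConvexBody K) {y : Eu n} (hy : y ∈ K) (x : Sph n) :
    ⟪(x : Eu n), y⟫_ℝ * (‖y‖ + ⟪(x : Eu n), y⟫_ℝ) ≤ 2 * ‖y‖ * sfn K x := by
  have hle := inner_le_sfn hK.isCompact x hy
  have hpos := hK.sfn_coe_pos x
  have hnorm : |⟪(x : Eu n), y⟫_ℝ| ≤ ‖y‖ := by
    simpa using abs_real_inner_le_norm (x : Eu n) y
  obtain ⟨hneg, hself⟩ := abs_le.1 hnorm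
  rcases le_total 0 ⟪(x : Eu n), y⟫_ℝ with hs | hs
  · nlinarith [mul_le_mul hle hself hs hpos.le]
  · exact (mul_nonpos_of_nonpos_of_nonneg hs (by linarith)).trans (by positivity)

lemma norm_le (hK : IsC2ConvexBody K) {y : Eu n} (hy : y ∈ K) :
    ‖y‖ ≤ 2 * (n + 1) * meanRadius K := by
  have hsfn := hK.continuous_sfn
  have hfirst := integral_inner_toSphere y
  have hsecond := integral_inner_mul_inner_toSphere finrank_euclideanSpace_fin y y
  rw [← sphMeas] at hfirst hsecond
  have hint : ∫ x : Sph n, ⟪(x : Eu n), y⟫_ℝ * (‖y‖ + ⟪(x : Eu n), y⟫_ℝ) ∂sphMeas n ≤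
      2 * ‖y‖ * ((sphMeas n).real Set.univ * meanRadius K) := by
    rw [hK.measureReal_univ_mul_meanRadius, ← integral_const_mul]
    exact integral_mono
      (integrable_sphMeas_of_continuousOn (f := fun x => ⟪x, y⟫_ℝ * (‖y‖ + ⟪x, y⟫_ℝ))
        (by fun_prop))
      (integrable_sphMeas_of_continuousOn (f := fun x => 2 * ‖y‖ * sfn K x) (by fun_prop))
      (hK.inner_mul_norm_add_inner_le hy)
  simp only [mul_add] at hint
  rw [integral_add
    (integrable_sphMeas_of_continuousOn (f := fun x => ⟪x, y⟫_ℝ * ‖y‖) (by fun_prop))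
    (integrable_sphMeas_of_continuousOn (f := fun x => ⟪x, y⟫_ℝ * ⟪x, y⟫_ℝ) (by fun_prop)),
    integral_mul_const, hfirst, zero_mul, zero_add] at hint
  replace hint := mul_le_mul_of_nonneg_left hint (by positivity : (0 : ℝ) ≤ n + 1)
  rw [hsecond, real_inner_self_eq_norm_mul_norm] at hint
  have hω : 0 < (sphMeas n).real Set.univ := measureReal_univ_pos
  have hT := hK.meanRadius_pos
  rcases (norm_nonneg y).eq_or_lt with hy₀ | hy₀
  · rw [← hy₀]
    positivity
  · exact le_of_mul_le_mul_left (by linarith) (mul_pos hω hy₀)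

lemma norm_cK_le (hK : IsC2ConvexBody K) (hd : ∀ x : Sph n, 0 < dens K x) :
    ‖cK K‖ ≤ 2 * (n + 1) * meanRadius K := by
  have hint := integrable_sphMeas_of_continuousOn hK.continuousOn_dens
  have hV := hK.integral_dens_pos hd
  have hbound : ‖∫ x : Sph n, dens K x • gradient (sfn K) x ∂sphMeas n‖ ≤
      (∫ x : Sph n, dens K x ∂sphMeas n) * (2 * (n + 1) * meanRadius K) := by
    rw [← integral_mul_const]
    refine norm_integral_le_of_norm_le (hint.mul_const _) (.of_forall fun x => ?_)
    rw [norm_smul, norm_of_nonneg (hd x).le]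
    gcongr
    exacts [(hd x).le, hK.norm_le (hK.gradient_sfn_mem (ne_zero_of_mem_unit_sphere x))]
  rw [cK, norm_smul, norm_inv, norm_of_nonneg hV.le]
  exact (inv_mul_le_iff₀ hV).2 hbound

lemma norm_sub_cK_le (hK : IsC2ConvexBody K) (hd : ∀ x : Sph n, 0 < dens K x) {y : Eu n}
    (hy : y ∈ K) : ‖y - cK K‖ ≤ 4 * (n + 1) * meanRadius K := by
  linarith [norm_sub_le y (cK K), hK.norm_le hy, hK.norm_cK_le hd]

lemma norm_gradient_tsfn_le (hK : IsC2ConvexBody K) (hd : ∀ x : Sph n, 0 < dens K x) {z : Eu n}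
    (hz : z ≠ 0) : ‖gradient (tsfn K) z‖ ≤ 4 * (n + 1) * meanRadius K := by
  rw [hK.gradient_tsfn hz]
  exact hK.norm_sub_cK_le hd (hK.gradient_sfn_mem hz)

lemma abs_tsfn_le (hK : IsC2ConvexBody K) (hd : ∀ x : Sph n, 0 < dens K x) (x : Sph n) :
    |tsfn K x| ≤ 4 * (n + 1) * meanRadius K := by
  have hx := ne_zero_of_mem_unit_sphere x
  rw [← hK.inner_gradient_tsfn hx]
  refine (abs_real_inner_le_norm _ _).trans ?_
  rw [norm_eq_of_mem_sphere, one_mul]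
  exact hK.norm_gradient_tsfn_le hd hx

lemma lipschitzWith_tsfn_sub_meanRadius (hK : IsC2ConvexBody K) (hd : ∀ x : Sph n, 0 < dens K x) :
    LipschitzWith (4 * (n + 1) * meanRadius K).toNNReal
      fun x : Sph n => tsfn K x - meanRadius K := by
  have hlip : LipschitzWith (4 * (n + 1) * meanRadius K).toNNReal (tsfn K) :=
    lipschitzWith_sfn_sub_inner hK.isCompact hK.nonempty fun y hy =>
      (hK.norm_sub_cK_le hd hy).trans (le_coe_toNNReal _)
  simpa using (hlip.comp (.subtype_val _)).sub (LipschitzWith.const (meanRadius K))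

end IsC2ConvexBody

end MeanRadius

section HausdorffStability

variable {n : ℕ} {K : Set (Eu n)} {ε : ℝ}

namespace IsC2ConvexBody

lemma integral_tsfn_sub_meanRadius_sq_le (hK : IsC2ConvexBody K) (hn : 1 ≤ n) (hε : ε < 1)
    (hd : ∀ x : Sph n, 1 - ε ≤ dens K x ∧ dens K x ≤ 1 + ε) :
    ∫ x : Sph n, (tsfn K x - meanRadius K) ^ 2 ∂sphMeas n ≤
      2 * ε * (volume.real (ball (0 : Eu n) 1) * (4 * (n + 1) * meanRadius K) ^ 2) := by
  have hpos (x : Sph n) : 0 < dens K x := by linarith [(hd x).1]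
  have hε₀ : 0 ≤ ε := by linarith [hd (Classical.arbitrary _)]
  have hpoincare := integral_sub_average_sq_toSphere_le finrank_euclideanSpace_fin
    (posHomogeneous_tsfn K) (hK.contDiffOn_tsfn.of_le one_le_two)
  have henergy := hK.integral_norm_gradient_tsfn_sq_sub_le hε hd
  have hgrad : ∫ x : Sph n, ‖gradient (tsfn K) x‖ ^ 2 ∂sphMeas n ≤
      (n + 1) * (volume.real (ball (0 : Eu n) 1) * (4 * (n + 1) * meanRadius K) ^ 2) := by
    calc ∫ x : Sph n, ‖gradient (tsfn K) x‖ ^ 2 ∂sphMeas n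
        ≤ ∫ _ : Sph n, (4 * (n + 1) * meanRadius K) ^ 2 ∂sphMeas n := by
          refine integral_mono (integrable_sphMeas_of_continuousOn
            (hK.continuousOn_gradient_tsfn.norm.pow 2)) (integrable_const _) fun x => ?_
          dsimp only
          gcongr
          exact hK.norm_gradient_tsfn_le hpos (ne_zero_of_mem_unit_sphere x)
      _ = _ := by
          rw [integral_const, sphMeas, Measure.toSphere_real_apply_univ,
            finrank_euclideanSpace_fin, smul_eq_mul, Nat.cast_succ, mul_assoc]
  rw [← sphMeas] at hpoincare
  change n * ∫ x : Sph n, (tsfn K x - meanRadius K) ^ 2 ∂sphMeas n ≤ _ at hpoincare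
  have : (0 : ℝ) < n := by exact_mod_cast hn
  refine le_of_mul_le_mul_left ?_ (by positivity : (0 : ℝ) < n * (n + 1))
  calc n * (n + 1) * ∫ x : Sph n, (tsfn K x - meanRadius K) ^ 2 ∂sphMeas n
      ≤ (n + 1) * (∫ x : Sph n, ‖gradient (tsfn K) x‖ ^ 2 ∂sphMeas n -
          ∫ x : Sph n, tsfn K x ^ 2 ∂sphMeas n) := by
        rw [mul_comm (n : ℝ), mul_assoc]
        gcongr
    _ ≤ 2 * n * ε * ((n + 1) * (volume.real (ball (0 : Eu n) 1) *
          (4 * (n + 1) * meanRadius K) ^ 2)) := henergy.trans (by gcongr)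
    _ = _ := by ring

theorem abs_tsfn_sub_meanRadius_pow_le (hK : IsC2ConvexBody K) (hn : 1 ≤ n) (hε : ε < 1)
    (hd : ∀ x : Sph n, 1 - ε ≤ dens K x ∧ dens K x ≤ 1 + ε) (x : Sph n) :
    |tsfn K x - meanRadius K| ^ (n + 2) ≤ (32 * (n + 1) * meanRadius K) ^ (n + 2) * ε := by
  have hpos (x : Sph n) : 0 < dens K x := by linarith [(hd x).1]
  have hT := hK.meanRadius_pos
  have hε₀ : 0 ≤ ε := by linarith [hd x]
  set L := 4 * (n + 1) * meanRadius K with hL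
  have hL₀ : 0 ≤ L := by positivity
  have hcap := measure_ball_mul_abs_pow_le_integral_sq volume finrank_euclideanSpace_fin
    (hK.lipschitzWith_tsfn_sub_meanRadius hpos) (x₀ := x) (by
      rw [coe_toNNReal _ hL₀, abs_le]
      have := abs_le.1 (hK.abs_tsfn_le hpos x)
      constructor <;> nlinarith [mul_nonneg (Nat.cast_nonneg (α := ℝ) n) hT.le])
  rw [coe_toNNReal _ hL₀, ← sphMeas] at hcap
  have hball : 0 < volume.real (ball (0 : Eu n) 1) :=
    ENNReal.toReal_pos (measure_ball_pos _ _ one_pos).ne' measure_ball_lt_top.ne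
  refine le_of_mul_le_mul_left ?_ hball
  calc volume.real (ball (0 : Eu n) 1) * |tsfn K x - meanRadius K| ^ (n + 2)
      ≤ 2 ^ (n + 3) * (4 * L) ^ n * (2 * ε * (volume.real (ball (0 : Eu n) 1) * L ^ 2)) := by
        refine hcap.trans ?_
        gcongr
        exact hK.integral_tsfn_sub_meanRadius_sq_le hn hε hd
    _ = volume.real (ball (0 : Eu n) 1) * ((8 * L) ^ (n + 2) * ε) / 4 := by
        rw [show 8 * L = 2 * (4 * L) by ring, mul_pow 2 (4 * L)]
        ring
    _ ≤ volume.real (ball (0 : Eu n) 1) * ((32 * (n + 1) * meanRadius K) ^ (n + 2) * ε) := by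
        rw [show 8 * L = 32 * (n + 1) * meanRadius K by rw [hL]; ring]
        exact div_le_self (by positivity) (by norm_num)

end IsC2ConvexBody

theorem hausdorff_stability_general (hK : IsC2ConvexBody K) (hn : 1 ≤ n) (hε : ε < 1)
    (hd : ∀ x : Sph n, 1 - ε ≤ dens K x ∧ dens K x ≤ 1 + ε) (x : Sph n) :
    |tsfn K x / meanRadius K - 1| ≤ 32 * (n + 1) * ε ^ ((1 : ℝ) / (n + 2)) := by
  have hT := hK.meanRadius_pos
  have hε₀ : 0 ≤ ε := by linarith [hd x]
  have hroot : (ε ^ ((1 : ℝ) / (n + 2))) ^ (n + 2) = ε := by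
    rw [← rpow_natCast, ← rpow_mul hε₀]
    push_cast
    rw [one_div_mul_cancel (by positivity), rpow_one]
  rw [div_sub_one hT.ne', abs_div, abs_of_pos hT, div_le_iff₀ hT]
  refine le_of_pow_le_pow_left₀ (n := n + 2) (by positivity) (by positivity) ?_
  calc |tsfn K x - meanRadius K| ^ (n + 2)
      ≤ (32 * (n + 1) * meanRadius K) ^ (n + 2) * ε := hK.abs_tsfn_sub_meanRadius_pow_le hn hε hd x
    _ = (32 * (n + 1) * ε ^ ((1 : ℝ) / (n + 2)) * meanRadius K) ^ (n + 2) := by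
        rw [mul_right_comm _ (_ ^ _), mul_pow _ (_ ^ _), hroot]

end HausdorffStability

/-- There exist `ε₀, c₂ > 0` depending only on `n` such that if `K` is a smooth,
strictly convex body with the origin in its interior and `1−ε ≤ h/𝒦 ≤ 1+ε` on `S^n`
for some `ε ∈ (0, ε₀)`, then `δ_H(K̄, B) ≤ c₂ ε^{1/(n+2)}`, where `K̄` has support
function `h̃ / ⨍ h̃ dθ` and `h_B ≡ 1`. -/
theorem hausdorff_stability (n : ℕ) (hn : 1 ≤ n) :
    ∃ ε₀ c₂ : ℝ, 0 < ε₀ ∧ 0 < c₂ ∧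
      ∀ K : Set (Eu n), IsSmoothConvexBody K → (0 : Eu n) ∈ interior K →
        ∀ ε : ℝ, ε ∈ Set.Ioo 0 ε₀ →
          (∀ x : Sph n, 1 - ε ≤ dens K (x : Eu n) ∧ dens K (x : Eu n) ≤ 1 + ε) →
          ∀ x : Sph n,
            |tsfn K (x : Eu n) / (⨍ y : Sph n, tsfn K (y : Eu n) ∂sphMeas n) - 1| ≤
              c₂ * ε ^ ((1 : ℝ) / ((n : ℝ) + 2)) := by
  refine ⟨1, 32 * (n + 1), one_pos, by positivity, fun K hK _ ε hε hd x => ?_⟩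
  exact hausdorff_stability_general hK.isC2ConvexBody hn hε.2 hd x
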